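/- There exists a constant c > 0 (depending only on ξ and the sequence (x_k)) such that every nonzero polynomial R ∈ ℤ[T] of degree d ≤ 6 satisfies |R(ξ)| ≥ c·‖R‖^(−γ³) if d ≤ 3, and |R(ξ)| ≥ c·‖R‖^(γ²−2γ^d) if 4 ≤ d ≤ 6. -/

import Mathlib

open Polynomial Filter

noncomputable def gold : ℝ := (1 + Real.sqrt 5) / 2

def Mmat (k : ℕ) : Matrix (Fin 2) (Fin 2) ℤ := !![3, (-1)^k; (-1)^(k+1), 0]

noncomputable def Xnorm (x : ℕ → Matrix (Fin 2) (Fin 2) ℤ) (k : ℕ) : ℝ :=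
  max |(x k 0 0 : ℝ)| (max |(x k 0 1 : ℝ)| |(x k 1 1 : ℝ)|)

def MarkoffSeq (ξ : ℝ) (x : ℕ → Matrix (Fin 2) (Fin 2) ℤ) : Prop :=
  (∀ k, 1 ≤ k → x k 0 1 = x k 1 0) ∧
  (∀ k, 1 ≤ k → (x k).det = 1) ∧
  ∃ c₁ c₂ c₃ : ℝ, 0 < c₁ ∧ 0 < c₂ ∧ 0 < c₃ ∧ ∀ k, 1 ≤ k →
    (c₁ * Xnorm x k ^ gold ≤ Xnorm x (k+1) ∧ Xnorm x (k+1) ≤ c₂ * Xnorm x k ^ gold) ∧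
    (|(x k 0 0 : ℝ) * ξ - (x k 0 1 : ℝ)| ≤ c₃ / Xnorm x k ∧
     |(x k 0 1 : ℝ) * ξ - (x k 1 1 : ℝ)| ≤ c₃ / Xnorm x k) ∧
    (x (k+2) = x (k+1) * Mmat (k+1) * x k ∧ x (k+2) = x k * Mmat k * x (k+1)) ∧
    (Xnorm x k < Xnorm x (k+1) ∧ Xnorm x k < (1 + ξ^2) * |(x k 0 0 : ℝ)|)

def polyNorm (P : Polynomial ℤ) : ℕ := P.support.sup fun i => (P.coeff i).natAbs

noncomputable def distInt (η : ℝ) : ℝ := |η - round η|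

noncomputable def ratHeight (α : ℚ) : ℝ := max |(α.num : ℝ)| (α.den : ℝ)

def IsMinIntPoly (α : ℂ) (P : Polynomial ℤ) : Prop :=
  P ≠ 0 ∧ Polynomial.aeval α P = 0 ∧ P.content = 1 ∧ 0 < P.leadingCoeff ∧
  ∀ Q : Polynomial ℤ, Q ≠ 0 → Polynomial.aeval α Q = 0 → P.degree ≤ Q.degree

noncomputable def Qpoly (x : ℕ → Matrix (Fin 2) (Fin 2) ℤ) (k : ℕ) : Polynomial ℤ :=
  Polynomial.C (x k 0 1 * x (k+1) 1 1 - x k 1 1 * x (k+1) 0 1)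
  - Polynomial.C (x k 0 0 * x (k+1) 1 1 - x k 1 1 * x (k+1) 0 0) * Polynomial.X
  + Polynomial.C (x k 0 0 * x (k+1) 0 1 - x k 0 1 * x (k+1) 0 0) * Polynomial.X ^ 2

/-- The additive subgroup generated by the pairs `(1, 1)` and `(y, y')` of real numbers. -/
def combGroup (y y' : ℝ) : AddSubgroup (ℝ × ℝ) := AddSubgroup.closure {1, (y, y')}

lemma mem_combGroup {y y' : ℝ} {z : ℝ × ℝ} :
    z ∈ combGroup y y' ↔ ∃ m n : ℤ, z.1 = m + n * y ∧ z.2 = m + n * y' := by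
  unfold combGroup
  rw [AddSubgroup.mem_closure_pair]
  constructor
  · rintro ⟨m, n, rfl⟩
    exact ⟨m, n, by simp, by simp⟩
  · rintro ⟨m, n, h1, h2⟩
    refine ⟨m, n, Prod.ext ?_ ?_⟩
    · simp [h1]
    · simp [h2]

/-- The arithmetic of the pair of roots `θ, θ'` of `a T² + (3 e a - 2 b) T + (c - 3 e b)` together
with the pair of conjugate units `u, u'` of trace `3 a`. -/
structure RootPair (a b c e : ℤ) (θ θ' u u' : ℝ) : Prop where
  sq_sign : e * e = 1
  det_one : a * c - b * b = 1
  sum_roots : (a : ℝ) * (θ + θ') = 2 * b - 3 * e * a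
  mul_roots : (a : ℝ) * (θ * θ') = c - 3 * e * b
  unit_eq : u = 3 * a - e * b + e * a * θ
  unit_eq' : u' = 3 * a - e * b + e * a * θ'
  root : (a : ℝ) * θ ^ 2 = -((3 * e * a - 2 * b) * θ + (c - 3 * e * b))
  root' : (a : ℝ) * θ' ^ 2 = -((3 * e * a - 2 * b) * θ' + (c - 3 * e * b))

namespace RootPair

variable {a b c e : ℤ} {θ θ' u u' : ℝ}

lemma symm (h : RootPair a b c e θ θ' u u') : RootPair a b c e θ' θ u' u where
  sq_sign := h.sq_sign
  det_one := h.det_one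
  sum_roots := by rw [add_comm]; exact h.sum_roots
  mul_roots := by rw [mul_comm θ']; exact h.mul_roots
  unit_eq := h.unit_eq'
  unit_eq' := h.unit_eq
  root := h.root'
  root' := h.root

lemma unit_mul_root (h : RootPair a b c e θ θ' u u') :
    u * θ = 3 * b - e * c + e * b * θ := by
  have he : (e : ℝ) * e = 1 := by exact_mod_cast h.sq_sign
  rw [h.unit_eq]
  linear_combination (e : ℝ) * h.root - (3 * a * θ - 3 * b) * he

lemma unit_sq (h : RootPair a b c e θ θ' u u') : u * u = 3 * a * u - 1 := by
  have he : (e : ℝ) * e = 1 := by exact_mod_cast h.sq_sign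
  have hd : (a : ℝ) * c - b * b = 1 := by exact_mod_cast h.det_one
  have := h.unit_mul_root
  have hu := h.unit_eq
  linear_combination u * hu + (e * a : ℝ) * this  - e * b * hu - hd +
    (b * b - a * c) * he

lemma mul_mem (h : RootPair a b c e θ θ' u u') {y z : ℝ × ℝ}
    (hy : y ∈ combGroup u u') (hz : z ∈ combGroup u u') : y * z ∈ combGroup u u' := by
  rw [mem_combGroup] at *
  obtain ⟨m, n, h1, h2⟩ := hy
  obtain ⟨m', n', h3, h4⟩ := hz
  have hu := h.unit_sq
  have hu' := h.symm.unit_sq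
  refine ⟨m * m' - n * n', m * n' + n * m' + 3 * a * n * n', ?_, ?_⟩
  · rw [Prod.fst_mul, h1, h3]; push_cast; linear_combination (n * n' : ℝ) * hu
  · rw [Prod.snd_mul, h2, h4]; push_cast; linear_combination (n * n' : ℝ) * hu'

lemma mul_mem_root (h : RootPair a b c e θ θ' u u') {y z : ℝ × ℝ}
    (hy : y ∈ combGroup u u') (hz : z ∈ combGroup θ θ') : y * z ∈ combGroup θ θ' := by
  rw [mem_combGroup] at *
  obtain ⟨m, n, h1, h2⟩ := hy
  obtain ⟨m', n', h3, h4⟩ := hz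
  refine ⟨m * m' + n * m' * (3 * a - e * b) + n * n' * (3 * b - e * c),
    m * n' + n * m' * (e * a) + n * n' * (e * b), ?_, ?_⟩
  · rw [Prod.fst_mul, h1, h3]; push_cast
    linear_combination (n * n' : ℝ) * h.unit_mul_root + (n * m' : ℝ) * h.unit_eq
  · rw [Prod.snd_mul, h2, h4]; push_cast
    linear_combination (n * n' : ℝ) * h.symm.unit_mul_root + (n * m' : ℝ) * h.unit_eq'

lemma intCast_mem (y y' : ℝ) (m : ℤ) : ((m : ℝ), (m : ℝ)) ∈ combGroup y y' :=
  mem_combGroup.2 ⟨m, 0, by simp, by simp⟩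

lemma self_mem (y y' : ℝ) : (y, y') ∈ combGroup y y' :=
  mem_combGroup.2 ⟨0, 1, by simp, by simp⟩

lemma swap_mem (h : RootPair a b c e θ θ' u u') : (u', u) ∈ combGroup u u' := by
  have he : (e : ℝ) * e = 1 := by exact_mod_cast h.sq_sign
  have : u + u' = 3 * a := by
    rw [h.unit_eq, h.unit_eq']
    linear_combination (e : ℝ) * h.sum_roots - 3 * a * he
  refine mem_combGroup.2 ⟨3 * a, -1, ?_, ?_⟩ <;> push_cast <;> linarith

lemma quad_mul_pow_mem (h : RootPair a b c e θ θ' u u') (p q r : ℤ) {i : ℕ} (hi : i ≤ 2) :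
    (((a : ℝ) ^ 2 * (p * θ' ^ 2 + q * θ' + r) * θ ^ i,
      (a : ℝ) ^ 2 * (p * θ ^ 2 + q * θ + r) * θ' ^ i) : ℝ × ℝ) ∈ combGroup u u' := by
  have he : (e : ℝ) * e = 1 := by exact_mod_cast h.sq_sign
  have hA : (((a : ℝ) * θ, (a : ℝ) * θ') : ℝ × ℝ) ∈ combGroup u u' := by
    refine mem_combGroup.2 ⟨b - 3 * e * a, e, ?_, ?_⟩ <;> push_cast
    · rw [h.unit_eq]; linear_combination (b - a * θ : ℝ) * he
    · rw [h.unit_eq']; linear_combination (b - a * θ' : ℝ) * he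
  have hA' : (((a : ℝ) * θ', (a : ℝ) * θ) : ℝ × ℝ) ∈ combGroup u u' := by
    refine mem_combGroup.2 ⟨b - 3 * e * a + e * (3 * a), -e, ?_, ?_⟩ <;> push_cast
    · rw [h.unit_eq]; linear_combination h.sum_roots - (b - a * θ : ℝ) * he
    · rw [h.unit_eq']; linear_combination h.sum_roots - (b - a * θ' : ℝ) * he
  have hP := intCast_mem u u' (c - 3 * e * b)
  have ha := intCast_mem u u' a
  have hp := intCast_mem u u' p
  have hq := intCast_mem u u' q
  have hr := intCast_mem u u' r
  have hm := h.mul_roots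
  interval_cases i
  · convert add_mem (add_mem (h.mul_mem hp (h.mul_mem hA' hA')) (h.mul_mem hq (h.mul_mem ha hA')))
      (h.mul_mem hr (h.mul_mem ha ha)) using 1
    ext <;> simp <;> ring
  · convert add_mem (add_mem (h.mul_mem hp (h.mul_mem hP hA')) (h.mul_mem hq (h.mul_mem ha hP)))
      (h.mul_mem hr (h.mul_mem ha hA)) using 1
    ext <;> simp
    · linear_combination (p * a * θ' + q * a) * hm
    · linear_combination (p * a * θ + q * a) * hm
  · convert add_mem (add_mem (h.mul_mem hp (h.mul_mem hP hP)) (h.mul_mem hq (h.mul_mem hP hA)))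
      (h.mul_mem hr (h.mul_mem hA hA)) using 1
    ext <;> simp
    · linear_combination (p * (a * θ * θ' + c - 3 * e * b) + q * a * θ) * hm
    · linear_combination (p * (a * θ * θ' + c - 3 * e * b) + q * a * θ') * hm

lemma quad_pow_mul_pow_mem (h : RootPair a b c e θ θ' u u') (p q r : ℤ) (j : ℕ) :
    ∀ i : ℕ, i ≤ 2 * j →
    (((a : ℝ) ^ (2 * j) * (p * θ' ^ 2 + q * θ' + r) ^ j * θ ^ i,
      (a : ℝ) ^ (2 * j) * (p * θ ^ 2 + q * θ + r) ^ j * θ' ^ i) : ℝ × ℝ) ∈ combGroup u u' := by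
  induction j with
  | zero =>
    intro i hi
    obtain rfl : i = 0 := by omega
    simpa using intCast_mem u u' 1
  | succ j ih =>
    intro i hi
    have h1 := ih (i - min i 2) (by omega)
    have h2 := h.quad_mul_pow_mem p q r (i := min i 2) (by omega)
    have hs : i = min i 2 + (i - min i 2) := by omega
    convert h.mul_mem h2 h1 using 1
    ext
    · have hpow : θ ^ i = θ ^ min i 2 * θ ^ (i - min i 2) := by rw [← pow_add, ← hs]
      simp only [Prod.fst_mul, hpow]
      ring
    · have hpow : θ' ^ i = θ' ^ min i 2 * θ' ^ (i - min i 2) := by rw [← pow_add, ← hs]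
      simp only [Prod.snd_mul, hpow]
      ring

lemma aeval_mem_even (h : RootPair a b c e θ θ' u u') (p q r : ℤ) (j : ℕ) (R : ℤ[X])
    (hR : R.natDegree ≤ 2 * j) :
    (((a : ℝ) ^ (2 * j) * (p * θ' ^ 2 + q * θ' + r) ^ j * aeval θ R,
      (a : ℝ) ^ (2 * j) * (p * θ ^ 2 + q * θ + r) ^ j * aeval θ' R) : ℝ × ℝ)
      ∈ combGroup u u' := by
  rw [aeval_eq_sum_range' (Nat.lt_succ_of_le hR), aeval_eq_sum_range' (Nat.lt_succ_of_le hR),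
    Finset.mul_sum, Finset.mul_sum, prod_mk_sum]
  refine sum_mem fun i hi => ?_
  convert h.mul_mem (intCast_mem u u' (R.coeff i))
    (h.quad_pow_mul_pow_mem p q r j i (Nat.lt_succ_iff.1 (Finset.mem_range.1 hi))) using 1
  ext <;> simp <;> ring

lemma aeval_mem_odd (h : RootPair a b c e θ θ' u u') (p q r : ℤ) (j : ℕ) (R : ℤ[X])
    (hR : R.natDegree ≤ 2 * j + 1) :
    (((a : ℝ) ^ (2 * j) * (p * θ' ^ 2 + q * θ' + r) ^ j * aeval θ R,
      (a : ℝ) ^ (2 * j) * (p * θ ^ 2 + q * θ + r) ^ j * aeval θ' R) : ℝ × ℝ)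
      ∈ combGroup θ θ' := by
  rw [aeval_eq_sum_range' (Nat.lt_succ_of_le hR), aeval_eq_sum_range' (Nat.lt_succ_of_le hR),
    Finset.mul_sum, Finset.mul_sum, prod_mk_sum]
  refine sum_mem fun i hi => ?_
  have hi' : i ≤ 2 * j + 1 := Nat.lt_succ_iff.1 (Finset.mem_range.1 hi)
  have key : ∀ l : ℕ, ∀ z ∈ combGroup θ θ', l ≤ 2 * j →
      ((R.coeff i : ℝ), (R.coeff i : ℝ)) * ((((a : ℝ) ^ (2 * j) * (p * θ' ^ 2 + q * θ' + r) ^ j * θ ^ l,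
      (a : ℝ) ^ (2 * j) * (p * θ ^ 2 + q * θ + r) ^ j * θ' ^ l) : ℝ × ℝ)) * z
        ∈ combGroup θ θ' := fun l z hz hl =>
    h.mul_mem_root (h.mul_mem (intCast_mem u u' (R.coeff i)) (h.quad_pow_mul_pow_mem p q r j l hl)) hz
  rcases Nat.lt_or_ge (2 * j) i with hlt | hle
  · obtain rfl : i = 2 * j + 1 := by omega
    convert key (2 * j) _ (self_mem θ θ') le_rfl using 1
    ext <;> simp <;> ring
  · convert key i _ (intCast_mem θ θ' 1) hle using 1
    ext <;> simp <;> ring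

end RootPair

/-- The integer quadratic polynomial `a T² + (3 e a - 2 b) T + (c - 3 e b)`. -/
noncomputable def quadPoly (a b c e : ℤ) : ℤ[X] :=
  C a * X ^ 2 + C (3 * e * a - 2 * b) * X + C (c - 3 * e * b)

lemma coeff_quadratic (p q r : ℤ) :
    (C p * X ^ 2 + C q * X + C r : ℤ[X]).coeff 2 = p ∧
    (C p * X ^ 2 + C q * X + C r : ℤ[X]).coeff 1 = q ∧
    (C p * X ^ 2 + C q * X + C r : ℤ[X]).coeff 0 = r := by
  refine ⟨?_, ?_, ?_⟩ <;> simp [coeff_X, coeff_C, coeff_X_pow, -eq_intCast]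

lemma content_quadPoly_dvd_two {a b c e : ℤ} (hd : a * c - b * b = 1) :
    (quadPoly a b c e).content ∣ 2 := by
  set g := (quadPoly a b c e).content with hg
  obtain ⟨e2, e1, e0⟩ := coeff_quadratic a (3 * e * a - 2 * b) (c - 3 * e * b)
  have h2 : g ∣ a := (content_dvd_coeff (p := quadPoly a b c e) 2).trans e2.dvd
  have h1 : g ∣ 3 * e * a - 2 * b := (content_dvd_coeff (p := quadPoly a b c e) 1).trans e1.dvd
  have h0 : g ∣ c - 3 * e * b := (content_dvd_coeff (p := quadPoly a b c e) 0).trans e0.dvd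
  have hb : g ∣ 2 * b := by
    have := dvd_sub (h2.mul_left (3 * e)) h1
    simpa using this
  have hc : g ∣ 2 * c := by
    have := dvd_add (h0.mul_left 2) (hb.mul_left (3 * e))
    have h' : 2 * c = 2 * (c - 3 * e * b) + 3 * e * (2 * b) := by ring
    rwa [h']
  have : g ^ 2 ∣ 2 ^ 2 := by
    have h := dvd_sub (mul_dvd_mul (h2.mul_left 2) hc) (mul_dvd_mul hb hb)
    have h' : (2 : ℤ) ^ 2 = 2 * a * (2 * c) - 2 * b * (2 * b) := by linear_combination (-4) * hd
    rwa [h', sq]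
  exact (Int.pow_dvd_pow_iff two_ne_zero).1 this

namespace RootPair

variable {a b c e : ℤ} {θ θ' u u' : ℝ}

lemma quadPoly_map (h : RootPair a b c e θ θ' u u') :
    (quadPoly a b c e).map (Int.castRingHom ℝ) = C (a : ℝ) * ((X - C θ) * (X - C θ')) := by
  have h1 : C (a : ℝ) * (C θ + C θ') = C (2 * b - 3 * e * a : ℝ) := by
    rw [← h.sum_roots]; simp
  have h2 : C (a : ℝ) * (C θ * C θ') = C (c - 3 * e * b : ℝ) := by
    rw [← h.mul_roots]; simp
  have h3 : (quadPoly a b c e).map (Int.castRingHom ℝ) =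
      C (a : ℝ) * X ^ 2 - C (2 * b - 3 * e * a : ℝ) * X + C (c - 3 * e * b : ℝ) := by
    simp only [quadPoly, Polynomial.map_add, Polynomial.map_mul, map_C, Polynomial.map_pow, map_X,
      eq_intCast (Int.castRingHom ℝ)]
    push_cast
    rw [← neg_sub (2 * (b : ℝ)), C_neg]
    ring
  rw [h3, ← h1, ← h2]
  ring

lemma exists_quadPoly_mul_eq (h : RootPair a b c e θ θ' u u') (ha : a ≠ 0) (hne : θ ≠ θ')
    {R : ℤ[X]} (hθ : aeval θ R = 0) (hθ' : aeval θ' R = 0) :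
    ∃ A : ℤ[X], quadPoly a b c e * A = C 2 * R := by
  set F := quadPoly a b c e with hF
  have hF0 : F ≠ 0 := by
    intro h0
    have := (coeff_quadratic a (3 * e * a - 2 * b) (c - 3 * e * b)).1
    rw [← quadPoly, ← hF, h0, coeff_zero] at this
    exact ha this.symm
  have hdvd : F.map (Int.castRingHom ℝ) ∣ R.map (Int.castRingHom ℝ) := by
    rw [h.quadPoly_map]
    have hu : IsUnit (C (a : ℝ)) := isUnit_C.2 (IsUnit.mk0 _ (by exact_mod_cast ha))
    rw [hu.mul_left_dvd]
    have hcop : IsCoprime (X - C θ) (X - C θ') :=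
      isCoprime_X_sub_C_of_isUnit_sub (IsUnit.mk0 _ (sub_ne_zero.2 hne))
    refine hcop.mul_dvd ?_ ?_
    · rw [dvd_iff_isRoot, IsRoot, eval_map, ← hθ]; rfl
    · rw [dvd_iff_isRoot, IsRoot, eval_map, ← hθ']; rfl
  have hdvdQ : F.map (Int.castRingHom ℚ) ∣ R.map (Int.castRingHom ℚ) := by
    rw [← map_dvd_map' (Rat.castHom ℝ), Polynomial.map_map,
      Polynomial.map_map]
    rwa [show (Rat.castHom ℝ).comp (Int.castRingHom ℚ) = Int.castRingHom ℝ from RingHom.ext_int _ _]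
  have hprim : F.primPart.map (Int.castRingHom ℚ) ∣ R.map (Int.castRingHom ℚ) := by
    refine dvd_trans ?_ hdvdQ
    conv_rhs => rw [F.eq_C_content_mul_primPart, Polynomial.map_mul]
    exact Dvd.intro_left _ rfl
  have hdvdZ : F.primPart ∣ R :=
    (IsPrimitive.Int.dvd_iff_map_cast_dvd_map_cast _ _ F.isPrimitive_primPart).2 hprim
  obtain ⟨B, hB⟩ := hdvdZ
  obtain ⟨g, hg⟩ := content_quadPoly_dvd_two (e := e) h.det_one
  refine ⟨C g * B, ?_⟩
  have h2 : (C 2 : ℤ[X]) = C F.content * C g := by rw [← C_mul, ← hg]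
  conv_lhs => rw [F.eq_C_content_mul_primPart]
  rw [h2, hB]
  ring

end RootPair

/-- Coefficients are bounded by `polyNorm`. -/
lemma abs_coeff_le_polyNorm (R : ℤ[X]) (i : ℕ) : |(R.coeff i : ℝ)| ≤ polyNorm R := by
  by_cases hi : R.coeff i = 0
  · simp [hi]
  · have : (R.coeff i).natAbs ≤ polyNorm R :=
      Finset.le_sup (f := fun i => (R.coeff i).natAbs) (mem_support_iff.2 hi)
    calc |(R.coeff i : ℝ)| = ((R.coeff i).natAbs : ℝ) := by
          rw [Nat.cast_natAbs, Int.cast_abs]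
      _ ≤ polyNorm R := by exact_mod_cast this

lemma one_le_polyNorm {R : ℤ[X]} (hR : R ≠ 0) : (1 : ℝ) ≤ polyNorm R := by
  refine le_trans ?_ (abs_coeff_le_polyNorm R R.natDegree)
  have : (1 : ℤ) ≤ |R.leadingCoeff| := Int.one_le_abs (leadingCoeff_ne_zero.2 hR)
  exact_mod_cast this

lemma abs_pow_sub_pow_le_of_le {B x y : ℝ} (hx : |x| ≤ B) (hy : |y| ≤ B) (hB : 1 ≤ B) (i : ℕ) :
    |x ^ i - y ^ i| ≤ i * B ^ i * |x - y| := by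
  induction i with
  | zero => simp
  | succ i ih =>
    have h1 : x ^ (i + 1) - y ^ (i + 1) = x * (x ^ i - y ^ i) + y ^ i * (x - y) := by ring
    have hyi : |y ^ i| ≤ B ^ (i + 1) := by
      rw [abs_pow]
      calc |y| ^ i ≤ B ^ i := pow_le_pow_left₀ (abs_nonneg y) hy i
        _ ≤ B ^ (i + 1) := pow_le_pow_right₀ hB (Nat.le_succ i)
    calc |x ^ (i + 1) - y ^ (i + 1)| ≤ |x| * |x ^ i - y ^ i| + |y ^ i| * |x - y| := by
          rw [h1, ← abs_mul, ← abs_mul]; exact abs_add_le _ _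
      _ ≤ B * (i * B ^ i * |x - y|) + B ^ (i + 1) * |x - y| := by gcongr
      _ = _ := by push_cast; ring

lemma abs_pow_sub_linear_le {B x y : ℝ} (hx : |x| ≤ B) (hy : |y| ≤ B) (hB : 1 ≤ B) (i : ℕ) :
    |x ^ i - y ^ i - i * y ^ (i - 1) * (x - y)| ≤ i ^ 2 * B ^ i * (x - y) ^ 2 := by
  induction i with
  | zero => simp
  | succ i ih =>
    have h1 : x ^ (i + 1) - y ^ (i + 1) - (i + 1 : ℕ) * y ^ (i + 1 - 1) * (x - y) =
        x * (x ^ i - y ^ i - i * y ^ (i - 1) * (x - y)) + i * y ^ (i - 1) * (x - y) ^ 2 := by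
      cases i with
      | zero => simp
      | succ i => simp only [Nat.add_sub_cancel]; push_cast; ring
    have hyi : |y ^ (i - 1)| ≤ B ^ (i + 1) := by
      rw [abs_pow]
      calc |y| ^ (i - 1) ≤ B ^ (i - 1) := pow_le_pow_left₀ (abs_nonneg y) hy _
        _ ≤ B ^ (i + 1) := pow_le_pow_right₀ hB (by omega)
    rw [h1]
    calc _ ≤ |x| * |x ^ i - y ^ i - i * y ^ (i - 1) * (x - y)|
            + i * |y ^ (i - 1)| * (x - y) ^ 2 := by
          refine (abs_add_le _ _).trans_eq ?_
          rw [abs_mul, abs_mul, abs_mul, Nat.abs_cast, abs_of_nonneg (sq_nonneg (x - y))]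
      _ ≤ B * (i ^ 2 * B ^ i * (x - y) ^ 2) + i * B ^ (i + 1) * (x - y) ^ 2 := by gcongr
      _ ≤ _ := by
          have : 0 ≤ B ^ (i + 1) * (x - y) ^ 2 := by positivity
          have hi : (0 : ℝ) ≤ i := Nat.cast_nonneg i
          have h3 := mul_le_mul_of_nonneg_right (by nlinarith : (i : ℝ) ^ 2 + i ≤ (i + 1) ^ 2) this
          push_cast
          calc _ = ((i : ℝ) ^ 2 + i) * (B ^ (i + 1) * (x - y) ^ 2) := by ring
            _ ≤ _ := h3
            _ = _ := by ring

/-- Values, increments and first order expansions of integer polynomials of degree at most six on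
a bounded interval are controlled by `polyNorm`. -/
lemma exists_aeval_bound (ξ B : ℝ) (hB : 1 ≤ B) (hξ : |ξ| ≤ B) :
    ∃ C : ℝ, 1 ≤ C ∧ ∀ R : ℤ[X], R.natDegree ≤ 6 →
      (∀ y, |y| ≤ B → |aeval y R| ≤ C * polyNorm R) ∧
      (∀ y z, |y| ≤ B → |z| ≤ B → |aeval y R - aeval z R| ≤ C * polyNorm R * |y - z|) ∧
      ∃ ρ : ℝ, ∀ y, |y| ≤ B →
        |aeval y R - aeval ξ R - ρ * (y - ξ)| ≤ C * polyNorm R * (y - ξ) ^ 2 := by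
  have hB6 : ∀ i ∈ Finset.range 7, B ^ i ≤ B ^ 6 := fun i hi =>
    pow_le_pow_right₀ hB (by have := Finset.mem_range.1 hi; omega)
  have hi6 : ∀ i ∈ Finset.range 7, (i : ℝ) ≤ 6 := fun i hi => by
    have := Finset.mem_range.1 hi
    exact_mod_cast (by omega : i ≤ 6)
  have hB0 : 0 ≤ B ^ 6 := by positivity
  have hB1 : 1 ≤ B ^ 6 := one_le_pow₀ hB
  refine ⟨7 * (36 * B ^ 6), by linarith, fun R hR => ?_⟩
  have hH : (0 : ℝ) ≤ polyNorm R := Nat.cast_nonneg _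
  have hsum : ∀ y : ℝ, aeval y R = ∑ i ∈ Finset.range 7, (R.coeff i : ℝ) * y ^ i := fun y => by
    rw [aeval_eq_sum_range' (Nat.lt_succ_of_le hR)]
    simp
  have key : ∀ (f : ℕ → ℝ) (D : ℝ), (∀ i ∈ Finset.range 7, |f i| ≤ 36 * B ^ 6 * D) →
      |∑ i ∈ Finset.range 7, (R.coeff i : ℝ) * f i| ≤ 7 * (36 * B ^ 6) * polyNorm R * D := by
    intro f D hf
    calc _ ≤ ∑ i ∈ Finset.range 7, |(R.coeff i : ℝ) * f i| := Finset.abs_sum_le_sum_abs _ _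
      _ ≤ ∑ i ∈ Finset.range 7, (polyNorm R : ℝ) * (36 * B ^ 6 * D) := by
          refine Finset.sum_le_sum fun i hi => ?_
          rw [abs_mul]
          exact mul_le_mul (abs_coeff_le_polyNorm R i) (hf i hi) (abs_nonneg _) hH
      _ = _ := by rw [Finset.sum_const, Finset.card_range]; simp; ring
  refine ⟨fun y hy => ?_, fun y z hy hz => ?_, ∑ i ∈ Finset.range 7, (R.coeff i : ℝ) * (i * ξ ^ (i - 1)),
    fun y hy => ?_⟩
  · rw [hsum, ← mul_one (_ * _)]
    refine key _ _ fun i hi => ?_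
    rw [abs_pow]
    have := (pow_le_pow_left₀ (abs_nonneg y) hy i).trans (hB6 i hi)
    linarith
  · rw [hsum, hsum, ← Finset.sum_sub_distrib]
    simp_rw [← mul_sub]
    refine key _ _ fun i hi => (abs_pow_sub_pow_le_of_le hy hz hB i).trans ?_
    have h1 := hi6 i hi
    have h2 := hB6 i hi
    gcongr
    linarith
  · rw [hsum, hsum, ← Finset.sum_sub_distrib, Finset.sum_mul, ← Finset.sum_sub_distrib]
    simp_rw [mul_assoc, ← mul_sub]
    have h0 := key (fun i => y ^ i - ξ ^ i - i * ξ ^ (i - 1) * (y - ξ)) ((y - ξ) ^ 2)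
      fun i hi => (abs_pow_sub_linear_le hy hξ hB i).trans (by
        have h1 : (i : ℝ) ^ 2 ≤ 36 := by
          have := hi6 i hi
          have h0 : (0 : ℝ) ≤ i := Nat.cast_nonneg i
          nlinarith
        have h2 := hB6 i hi
        gcongr)
    simpa only [mul_assoc] using h0

/-- Relations between the entries of three consecutive matrices of the sequence, where
`e` is the sign `(-1) ^ k` attached to the first one. -/
structure MarkoffStep (a b c a' b' c' a'' b'' e : ℝ) : Prop where
  sign : e * e = 1
  det : a * c - b * b = 1
  det' : a' * c' - b' * b' = 1
  comm : a * c' + c * a' - 2 * b * b' = 3 * e * (b * a' - a * b')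
  fst : a'' = (3 * a - e * b) * a' + e * a * b'
  snd : b'' = (3 * b - e * c) * a' + e * b * b'

namespace MarkoffStep

variable {a b c a' b' c' a'' b'' e : ℝ}

lemma markoff (h : MarkoffStep a b c a' b' c' a'' b'' e) :
    a ^ 2 + a' ^ 2 + a'' ^ 2 = 3 * a * a' * a'' := by
  have hF : a * b' ^ 2 + (3 * e * a - 2 * b) * a' * b' + (c - 3 * e * b) * a' ^ 2 = -a := by
    linear_combination a' * h.comm - a * h.det'
  have hw : a'' = 3 * a * a' - e * (b * a' - a * b') := by rw [h.fst]; ring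
  rw [hw]
  linear_combination a * hF - a' ^ 2 * h.det + (b * a' - a * b') ^ 2 * h.sign

lemma quad_snd_div_fst (h : MarkoffStep a b c a' b' c' a'' b'' e) (ha : a ≠ 0)
    (ha'' : a'' ≠ 0) :
    a * (b'' / a'') ^ 2 + (3 * e * a - 2 * b) * (b'' / a'') + (c - 3 * e * b) = -a / a'' ^ 2 := by
  have hw : b * a'' - a * b'' = e * a' := by
    rw [h.fst, h.snd]; linear_combination (e * a') * h.det
  have hm := h.markoff
  have : a * b'' ^ 2 + (3 * e * a - 2 * b) * a'' * b'' + (c - 3 * e * b) * a'' ^ 2 = -a := by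
    apply mul_left_cancel₀ ha
    linear_combination hm + a'' ^ 2 * h.det
      + (b * a'' - a * b'' + e * a' - 3 * e * a * a'') * hw + (a' ^ 2 - 3 * a * a' * a'') * h.sign
  field_simp
  linear_combination this

/-- The resultant of two consecutive quadratic polynomials is `-4`. -/
lemma resultant (h : MarkoffStep a b c a' b' c' a'' b'' e) (ha' : a' ≠ 0) {θ θ' : ℝ}
    (hs : a' * (θ + θ') = 2 * b' + 3 * e * a') (hp : a' * (θ * θ') = c' + 3 * e * b') :
    a' ^ 2 * ((a * θ ^ 2 + (3 * e * a - 2 * b) * θ + (c - 3 * e * b)) *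
      (a * θ' ^ 2 + (3 * e * a - 2 * b) * θ' + (c - 3 * e * b))) = -4 := by
  have hm := h.markoff
  have hs' : θ + θ' = (2 * b' + 3 * e * a') / a' := by field_simp; linear_combination hs
  have hp' : θ * θ' = (c' + 3 * e * b') / a' := by field_simp; linear_combination hp
  have h1 : ∀ q r : ℝ, a' ^ 2 * ((a * θ ^ 2 + q * θ + r) * (a * θ' ^ 2 + q * θ' + r)) =
      a' ^ 2 * (a ^ 2 * (θ * θ') ^ 2 + a * q * (θ * θ') * (θ + θ') +
        a * r * ((θ + θ') ^ 2 - 2 * (θ * θ')) + q ^ 2 * (θ * θ') + q * r * (θ + θ') + r ^ 2) := by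
    intro q r; ring
  have h2 : ∀ q r q' r' : ℝ, a' ^ 2 * (a ^ 2 * (r' / a') ^ 2 + a * q * (r' / a') * (q' / a') +
        a * r * ((q' / a') ^ 2 - 2 * (r' / a')) + q ^ 2 * (r' / a') + q * r * (q' / a') + r ^ 2) =
      ((q * q' + 2 * a * r' + 2 * a' * r) ^ 2 - (q ^ 2 - 4 * a * r) * (q' ^ 2 - 4 * a' * r')) / 4 := by
    intro q r q' r'
    field_simp
    ring
  rw [h1, hs', hp', h2]
  have h3 : (3 * e * a - 2 * b) * (2 * b' + 3 * e * a') + 2 * a * (c' + 3 * e * b') +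
      2 * a' * (c - 3 * e * b) = 6 * a'' - 9 * a * a' := by
    rw [h.fst]; linear_combination 2 * h.comm + 9 * a * a' * h.sign
  have h4 : (3 * e * a - 2 * b) ^ 2 - 4 * a * (c - 3 * e * b) = 9 * a ^ 2 - 4 := by
    linear_combination 9 * a ^ 2 * h.sign - 4 * h.det
  have h5 : (2 * b' + 3 * e * a') ^ 2 - 4 * a' * (c' + 3 * e * b') = 9 * a' ^ 2 - 4 := by
    linear_combination 9 * a' ^ 2 * h.sign - 4 * h.det'
  rw [h3, h4, h5]
  linear_combination 9 * hm

end MarkoffStep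

namespace MarkoffSeq

variable {ξ : ℝ} {x : ℕ → Matrix (Fin 2) (Fin 2) ℤ}

lemma det_entries (hx : MarkoffSeq ξ x) {k : ℕ} (hk : 1 ≤ k) :
    x k 0 0 * x k 1 1 - x k 0 1 * x k 0 1 = 1 := by
  have h := hx.2.1 k hk
  rw [Matrix.det_fin_two, ← hx.1 k hk] at h
  exact h

lemma step (hx : MarkoffSeq ξ x) {k : ℕ} (hk : 1 ≤ k) :
    MarkoffStep (x k 0 0) (x k 0 1) (x k 1 1) (x (k + 1) 0 0) (x (k + 1) 0 1) (x (k + 1) 1 1)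
      (x (k + 2) 0 0) (x (k + 2) 0 1) ((-1) ^ k) := by
  have hs : ((-1 : ℝ) ^ k) * (-1) ^ k = 1 := by rw [← mul_pow]; norm_num
  obtain ⟨c₁, c₂, c₃, -, -, -, h⟩ := hx.2.2
  have hprod := (h k hk).2.2.1.2
  have hsym := hx.1 k hk
  have hsym' := hx.1 (k + 1) (by omega)
  have hsym'' := hx.1 (k + 2) (by omega)
  have h00 := congrFun (congrFun hprod 0) 0
  have h01 := congrFun (congrFun hprod 0) 1
  have h10 := congrFun (congrFun hprod 1) 0
  simp only [Matrix.mul_apply, Fin.sum_univ_two, Mmat, Matrix.of_apply, Matrix.cons_val',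
    Matrix.cons_val_zero, Matrix.cons_val_one, Matrix.cons_val_fin_one, ← hsym, ← hsym', ← hsym'']
    at h00 h01 h10
  have h00' := congrArg (Int.cast : ℤ → ℝ) h00
  have h01' := congrArg (Int.cast : ℤ → ℝ) h01
  have h10' := congrArg (Int.cast : ℤ → ℝ) h10
  have hd : ((x k 0 0 : ℝ)) * x k 1 1 - x k 0 1 * x k 0 1 = 1 := by
    exact_mod_cast hx.det_entries hk
  have hd' : ((x (k + 1) 0 0 : ℝ)) * x (k + 1) 1 1 - x (k + 1) 0 1 * x (k + 1) 0 1 = 1 := by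
    exact_mod_cast hx.det_entries (k := k + 1) (by omega)
  push_cast [pow_succ] at h00' h01' h10'
  refine ⟨hs, hd, hd', ?_, ?_, ?_⟩
  · linear_combination (-1 : ℝ) ^ k * (h10' - h01') - (x k 0 0 * x (k + 1) 1 1 + x k 1 1 * x (k + 1) 0 0
       - 2 * x k 0 1 * x (k + 1) 0 1 : ℝ) * hs
  · linear_combination h00'
  · linear_combination h10'

end MarkoffSeq

/-- The square root of the normalised discriminant `1 - 4 / (9 a²)`. -/
noncomputable def discSqrt (a : ℤ) : ℝ := √(1 - 4 / (9 * (a : ℝ) ^ 2))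

/-- The root of `quadPoly a b c e` which is close to `b / a`. -/
noncomputable def nearRoot (a b e : ℤ) : ℝ := b / a - 3 * e / 2 * (1 - discSqrt a)

/-- The root of `quadPoly a b c e` which is close to `b / a - 3 e`. -/
noncomputable def farRoot (a b e : ℤ) : ℝ := b / a - 3 * e / 2 * (1 + discSqrt a)

/-- The large unit of trace `3 a`. -/
noncomputable def largeUnit (a : ℤ) : ℝ := 3 * a / 2 * (1 + discSqrt a)

/-- The small unit of trace `3 a`. -/
noncomputable def smallUnit (a : ℤ) : ℝ := 3 * a / 2 * (1 - discSqrt a)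

section Roots

variable {a b c e : ℤ}

lemma one_le_cast_sq (ha : a ≠ 0) : (1 : ℝ) ≤ (a : ℝ) ^ 2 := by
  have : (1 : ℤ) ≤ a ^ 2 := (by positivity : 0 < a ^ 2)
  exact_mod_cast this

lemma discSqrt_sq (ha : a ≠ 0) : 9 * (a : ℝ) ^ 2 * discSqrt a ^ 2 = 9 * (a : ℝ) ^ 2 - 4 := by
  have h := one_le_cast_sq ha
  have h4 : 4 / (9 * (a : ℝ) ^ 2) ≤ 1 := by rw [div_le_one (by positivity)]; linarith
  have ha' : (a : ℝ) ≠ 0 := by exact_mod_cast ha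
  rw [discSqrt, Real.sq_sqrt (by linarith)]
  field_simp

lemma discSqrt_nonneg (a : ℤ) : 0 ≤ discSqrt a := Real.sqrt_nonneg _

lemma discSqrt_le_one (a : ℤ) : discSqrt a ≤ 1 := by
  refine Real.sqrt_le_one.2 ?_
  have : 0 ≤ 4 / (9 * (a : ℝ) ^ 2) := by positivity
  linarith

lemma one_sub_discSqrt_le (ha : a ≠ 0) : 1 - discSqrt a ≤ 4 / (9 * (a : ℝ) ^ 2) := by
  have h := one_le_cast_sq ha
  rw [le_div_iff₀ (by positivity)]
  have h1 := discSqrt_sq ha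
  have h0 := discSqrt_nonneg a
  have h2 := discSqrt_le_one a
  nlinarith [mul_nonneg (mul_nonneg h0 (sub_nonneg.2 h2)) (by positivity : (0:ℝ) ≤ 9 * (a:ℝ)^2)]

lemma rootPair_roots (ha : a ≠ 0) (he : e * e = 1) (hd : a * c - b * b = 1) :
    RootPair a b c e (nearRoot a b e) (farRoot a b e) (largeUnit a) (smallUnit a) := by
  have ha' : (a : ℝ) ≠ 0 := by exact_mod_cast ha
  have he' : (e : ℝ) * e = 1 := by exact_mod_cast he
  have hd' : (a : ℝ) * c - b * b = 1 := by exact_mod_cast hd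
  have hs := discSqrt_sq ha
  have h1 : (a : ℝ) * nearRoot a b e = b - 3 * e / 2 * a * (1 - discSqrt a) := by
    rw [nearRoot]; field_simp
  have h2 : (a : ℝ) * farRoot a b e = b - 3 * e / 2 * a * (1 + discSqrt a) := by
    rw [farRoot]; field_simp
  refine ⟨he, hd, ?_, ?_, ?_, ?_, ?_, ?_⟩
  · linear_combination h1 + h2
  · apply mul_left_cancel₀ ha'
    linear_combination (a * farRoot a b e) * h1 + (b - 3 * e / 2 * a * (1 - discSqrt a)) * h2 - hd'
      - e ^ 2 / 4 * hs + he'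
  · rw [largeUnit]
    linear_combination -(e : ℝ) * h1 - 3 / 2 * a * (discSqrt a - 1) * he'
  · rw [smallUnit]
    linear_combination -(e : ℝ) * h2 + 3 / 2 * a * (discSqrt a + 1) * he'
  · apply mul_left_cancel₀ ha'
    linear_combination (a * nearRoot a b e + b + 3 * e / 2 * a * (1 + discSqrt a)- 2 * b) * h1 + hd'
      + e ^ 2 / 4 * hs - he'
  · apply mul_left_cancel₀ ha'
    linear_combination (a * farRoot a b e + b + 3 * e / 2 * a * (1 - discSqrt a)- 2 * b) * h2 + hd'
      + e ^ 2 / 4 * hs - he'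

lemma abs_sign (he : e * e = 1) : |(e : ℝ)| = 1 := by
  have he' : (e : ℝ) * e = 1 := by exact_mod_cast he
  nlinarith [abs_mul_abs_self (e : ℝ), abs_nonneg (e : ℝ)]

lemma abs_nearRoot_sub_le (ha : a ≠ 0) (he : e * e = 1) :
    |nearRoot a b e - b / a| ≤ 1 / (a : ℝ) ^ 2 := by
  have h1 := one_sub_discSqrt_le ha
  have h2 := discSqrt_le_one a
  have : nearRoot a b e - b / a = - (e * (3 / 2 * (1 - discSqrt a))) := by rw [nearRoot]; ring
  rw [this, abs_neg, abs_mul, abs_sign he, one_mul, abs_of_nonneg (by linarith)]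
  have h3 : 4 / (9 * (a : ℝ) ^ 2) = 4 / 9 * (1 / (a : ℝ) ^ 2) := by field_simp
  have h4 : 0 ≤ 1 / (a : ℝ) ^ 2 := by positivity
  linarith

lemma abs_farRoot_sub_le (ha : a ≠ 0) (he : e * e = 1) :
    |farRoot a b e - (b / a - 3 * e)| ≤ 1 / (a : ℝ) ^ 2 := by
  have h1 := one_sub_discSqrt_le ha
  have h2 := discSqrt_le_one a
  have : farRoot a b e - (b / a - 3 * e) = e * (3 / 2 * (1 - discSqrt a)) := by rw [farRoot]; ring
  rw [this, abs_mul, abs_sign he, one_mul, abs_of_nonneg (by linarith)]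
  have h3 : 4 / (9 * (a : ℝ) ^ 2) = 4 / 9 * (1 / (a : ℝ) ^ 2) := by field_simp
  have h4 : 0 ≤ 1 / (a : ℝ) ^ 2 := by positivity
  linarith

lemma abs_le_abs_largeUnit (a : ℤ) : |(a : ℝ)| ≤ |largeUnit a| := by
  have h0 := discSqrt_nonneg a
  rw [largeUnit, abs_mul, abs_div, abs_mul, abs_of_nonneg (by linarith : 0 ≤ 1 + discSqrt a)]
  norm_num
  nlinarith [abs_nonneg (a : ℝ)]

lemma abs_largeUnit_le (a : ℤ) : |largeUnit a| ≤ 3 * |(a : ℝ)| := by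
  have h0 := discSqrt_nonneg a
  have h1 := discSqrt_le_one a
  rw [largeUnit, abs_mul, abs_div, abs_mul, abs_of_nonneg (by linarith : 0 ≤ 1 + discSqrt a)]
  norm_num
  nlinarith [abs_nonneg (a : ℝ)]

lemma largeUnit_mul_smallUnit (ha : a ≠ 0) : largeUnit a * smallUnit a = 1 := by
  rw [largeUnit, smallUnit]
  linear_combination -(1 / 4) * discSqrt_sq ha

end Roots

namespace MarkoffSeq

variable {ξ : ℝ} {x : ℕ → Matrix (Fin 2) (Fin 2) ℤ}

lemma abs_entry_le_Xnorm (x : ℕ → Matrix (Fin 2) (Fin 2) ℤ) (k : ℕ) :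
    |(x k 0 0 : ℝ)| ≤ Xnorm x k := le_max_left _ _

lemma Xnorm_lt (hx : MarkoffSeq ξ x) {k : ℕ} (hk : 1 ≤ k) :
    Xnorm x k < (1 + ξ ^ 2) * |(x k 0 0 : ℝ)| := by
  obtain ⟨c₁, c₂, c₃, -, -, -, h⟩ := hx.2.2
  exact (h k hk).2.2.2.2

lemma entry_ne_zero (hx : MarkoffSeq ξ x) {k : ℕ} (hk : 1 ≤ k) : x k 0 0 ≠ 0 := by
  intro h0
  have h1 := hx.Xnorm_lt hk
  have h2 := abs_entry_le_Xnorm x k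
  rw [h0] at h1 h2
  simp only [Int.cast_zero, abs_zero, mul_zero] at h1 h2
  linarith

lemma one_le_abs_entry (hx : MarkoffSeq ξ x) {k : ℕ} (hk : 1 ≤ k) : 1 ≤ |(x k 0 0 : ℝ)| := by
  exact_mod_cast Int.one_le_abs (hx.entry_ne_zero hk)

lemma one_le_Xnorm (hx : MarkoffSeq ξ x) {k : ℕ} (hk : 1 ≤ k) : 1 ≤ Xnorm x k :=
  (hx.one_le_abs_entry hk).trans (abs_entry_le_Xnorm x k)

lemma exists_Xnorm_eq_intCast (x : ℕ → Matrix (Fin 2) (Fin 2) ℤ) (k : ℕ) :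
    ∃ n : ℤ, Xnorm x k = n :=
  ⟨max |x k 0 0| (max |x k 0 1| |x k 1 1|), by simp [Xnorm]⟩

lemma natCast_le_Xnorm (hx : MarkoffSeq ξ x) {k : ℕ} (hk : 1 ≤ k) : (k : ℝ) ≤ Xnorm x k := by
  obtain ⟨c₁, c₂, c₃, -, -, -, h⟩ := hx.2.2
  induction k, hk using Nat.le_induction with
  | base => simpa using hx.one_le_Xnorm le_rfl
  | succ k hk ih =>
    have hlt := (h k hk).2.2.2.1
    obtain ⟨m, hm⟩ := exists_Xnorm_eq_intCast x k
    obtain ⟨n, hn⟩ := exists_Xnorm_eq_intCast x (k + 1)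
    rw [hm, hn] at hlt
    rw [hm] at ih
    rw [hn]
    have h1 : m + 1 ≤ n := by exact_mod_cast hlt
    have h2 : (m : ℝ) + 1 ≤ n := by exact_mod_cast h1
    push_cast
    linarith

lemma tendsto_log_Xnorm (hx : MarkoffSeq ξ x) :
    Tendsto (fun k => Real.log (Xnorm x k)) atTop atTop := by
  refine Real.tendsto_log_atTop.comp (tendsto_atTop_mono' _ ?_ tendsto_natCast_atTop_atTop)
  filter_upwards [eventually_ge_atTop 1] with k hk using hx.natCast_le_Xnorm hk

lemma exists_growth (hx : MarkoffSeq ξ x) : ∃ K : ℝ, ∀ k, 1 ≤ k →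
    |Real.log (Xnorm x (k + 1)) - gold * Real.log (Xnorm x k)| ≤ K := by
  obtain ⟨c₁, c₂, c₃, h1, h2, -, h⟩ := hx.2.2
  refine ⟨max |Real.log c₁| |Real.log c₂|, fun k hk => ?_⟩
  have hX := hx.one_le_Xnorm hk
  have hX' := hx.one_le_Xnorm (k := k + 1) (by omega)
  have hX0 : 0 < Xnorm x k := by linarith
  have hp : 0 < Xnorm x k ^ gold := Real.rpow_pos_of_pos hX0 _
  obtain ⟨hl, hu⟩ := (h k hk).1
  have e1 := Real.log_le_log (by positivity) hl
  have e2 := Real.log_le_log (by linarith) hu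
  rw [Real.log_mul h1.ne' hp.ne', Real.log_rpow hX0] at e1
  rw [Real.log_mul h2.ne' hp.ne', Real.log_rpow hX0] at e2
  rw [abs_le]
  have a1 := neg_abs_le (Real.log c₁)
  have a2 := le_abs_self (Real.log c₂)
  have b1 := le_max_left |Real.log c₁| |Real.log c₂|
  have b2 := le_max_right |Real.log c₁| |Real.log c₂|
  constructor <;> linarith

/-- Linear forms in `1, ξ` are at least `|n| ^ (-γ)` up to a constant. -/
lemma exists_irrationality (hx : MarkoffSeq ξ x) : ∃ K : ℝ, ∀ m n : ℤ, n ≠ 0 →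
    (m : ℝ) + n * ξ ≠ 0 ∧ -K - gold * Real.log n ≤ Real.log (m + n * ξ) := by
  obtain ⟨c₁, c₂, c₃, h1, h2, h3, h⟩ := hx.2.2
  obtain ⟨K₀, hK₀⟩ := hx.exists_growth
  have hg : 0 < gold := by unfold gold; positivity
  set M : ℝ := 2 * c₃ + (1 + ξ ^ 2) with hM
  have hM1 : 1 ≤ M := by nlinarith [sq_nonneg ξ]
  have hM0 : 0 < M := by linarith
  have key : ∀ m n : ℤ, n ≠ 0 → ∀ k, 1 ≤ k → M * |(n : ℝ)| ≤ Xnorm x k →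
      1 / (2 * Xnorm x k) ≤ |(m : ℝ) + n * ξ| := by
    intro m n hn k hk hMn
    have hX := hx.one_le_Xnorm hk
    have hn1 : 1 ≤ |(n : ℝ)| := by exact_mod_cast Int.one_le_abs hn
    have ha := abs_entry_le_Xnorm x k
    have hXa := hx.Xnorm_lt hk
    have hne : x k 0 0 * m + n * x k 0 1 ≠ 0 := by
      intro h0
      have hdvd : x k 0 0 ∣ n * x k 0 1 := ⟨-m, by linear_combination h0⟩
      have hcop : IsCoprime (x k 0 0) (x k 0 1) :=
        ⟨x k 1 1, -x k 0 1, by linear_combination hx.det_entries hk⟩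
      have hle := Int.le_of_dvd (abs_pos.2 hn) ((dvd_abs _ _).2 ((abs_dvd _ _).2 (hcop.dvd_of_dvd_mul_right hdvd)))
      have hle' : |(x k 0 0 : ℝ)| ≤ |(n : ℝ)| := by exact_mod_cast hle
      nlinarith [sq_nonneg ξ]
    have h4 : (1 : ℝ) ≤ |(x k 0 0 : ℝ) * m + n * x k 0 1| := by
      exact_mod_cast Int.one_le_abs hne
    have h5 : (x k 0 0 : ℝ) * (m + n * ξ) =
        (x k 0 0 * m + n * x k 0 1) + n * (x k 0 0 * ξ - x k 0 1) := by ring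
    have h6 : |(n : ℝ) * (x k 0 0 * ξ - x k 0 1)| ≤ 1 / 2 := by
      rw [abs_mul]
      calc _ ≤ |(n : ℝ)| * (c₃ / Xnorm x k) := by gcongr; exact (h k hk).2.1.1
        _ ≤ 1 / 2 := by
          rw [← mul_div_assoc, div_le_div_iff₀ (by linarith) (by norm_num)]
          nlinarith [sq_nonneg ξ]
    have h7 : 1 / 2 ≤ |(x k 0 0 : ℝ)| * |(m : ℝ) + n * ξ| := by
      rw [← abs_mul, h5]
      have := abs_sub_abs_le_abs_sub ((x k 0 0 : ℝ) * m + n * x k 0 1) (-(n * (x k 0 0 * ξ - x k 0 1)))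
      rw [abs_neg, sub_neg_eq_add] at this
      linarith
    rw [div_le_iff₀ (by linarith)]
    nlinarith [abs_nonneg ((m : ℝ) + n * ξ)]
  refine ⟨Real.log 2 + |Real.log (Xnorm x 1)| + |K₀| + gold * Real.log M, fun m n hn => ?_⟩
  have hn1 : 1 ≤ |(n : ℝ)| := by exact_mod_cast Int.one_le_abs hn
  have hlogn : 0 ≤ Real.log n := by rw [← Real.log_abs]; exact Real.log_nonneg hn1
  have hlogM : 0 ≤ Real.log M := Real.log_nonneg hM1
  have hlog2 : 0 < Real.log 2 := Real.log_pos (by norm_num)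
  have main : ∀ k, 1 ≤ k → M * |(n : ℝ)| ≤ Xnorm x k → (m : ℝ) + n * ξ ≠ 0 ∧
      -Real.log 2 - Real.log (Xnorm x k) ≤ Real.log (m + n * ξ) := by
    intro k hk hMn
    have := key m n hn k hk hMn
    have hX := hx.one_le_Xnorm hk
    have hpos : 0 < 1 / (2 * Xnorm x k) := by positivity
    refine ⟨abs_pos.1 (hpos.trans_le this), ?_⟩
    have h8 := Real.log_le_log hpos this
    rw [Real.log_abs, one_div, Real.log_inv, Real.log_mul (by norm_num) (by linarith)] at h8
    linarith
  have hex : ∃ k, M * |(n : ℝ)| ≤ Xnorm x (k + 1) := by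
    obtain ⟨k, hk⟩ := exists_nat_ge (M * |(n : ℝ)|)
    refine ⟨k, hk.trans (le_trans ?_ (hx.natCast_le_Xnorm (by omega)))⟩
    push_cast; linarith
  classical
  have hspec := Nat.find_spec hex
  obtain ⟨hne, hlow⟩ := main _ (by omega) hspec
  refine ⟨hne, le_trans ?_ hlow⟩
  rcases hk : Nat.find hex with _ | k
  · rw [zero_add]
    have := le_abs_self (Real.log (Xnorm x 1))
    nlinarith [abs_nonneg K₀, mul_nonneg hg.le hlogM, mul_nonneg hg.le hlogn]
  · have hmin := Nat.find_min hex (m := k) (by omega)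
    have hX := hx.one_le_Xnorm (k := k + 1) (by omega)
    have h9 := Real.log_le_log (by linarith) (not_le.1 hmin).le
    rw [Real.log_mul hM0.ne' (by positivity), Real.log_abs] at h9
    have h10 := (abs_le.1 (hK₀ (k + 1) (by omega))).2
    have h11 := mul_le_mul_of_nonneg_left h9 hg.le
    have := le_abs_self K₀
    have := abs_nonneg (Real.log (Xnorm x 1))
    linarith

end MarkoffSeq

/-- The value of `quadPoly a b c e` at a real number. -/
noncomputable def quadVal (a b c e : ℤ) (y : ℝ) : ℝ :=
  a * y ^ 2 + (3 * e * a - 2 * b : ℤ) * y + (c - 3 * e * b : ℤ)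

lemma RootPair.quadVal_eq {a b c e : ℤ} {θ θ' u u' : ℝ} (h : RootPair a b c e θ θ' u u') (y : ℝ) :
    quadVal a b c e y = a * (y - θ) * (y - θ') := by
  rw [quadVal]
  push_cast
  linear_combination y * h.sum_roots - h.mul_roots

/-- Logarithmic estimates, with uniform error `K`, for the near roots `α k` and the far roots `β k`
of the quadratic polynomials attached to a Markoff sequence approximating `ξ`. Here `t k` is
the logarithm of the height of the `k`-th matrix. -/
structure ApproxSystem (ξ K : ℝ) (a b c e : ℕ → ℤ) (t α β u u' : ℕ → ℝ) : Prop where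
  one_le : 1 ≤ K
  large : ∀ k, 10000 * K ≤ t k
  growth : ∀ k, |t (k + 1) - gold * t k| ≤ K
  pair : ∀ k, RootPair (a k) (b k) (c k) (e k) (α k) (β k) (u k) (u' k)
  a_ne : ∀ k, a k ≠ 0
  log_a : ∀ k, |Real.log (a k) - t k| ≤ K
  u_ne : ∀ k, u k ≠ 0
  log_u : ∀ k, |Real.log (u k) - t k| ≤ K
  u'_ne : ∀ k, u' k ≠ 0
  log_u' : ∀ k, |Real.log (u' k) + t k| ≤ K
  near_ne : ∀ k, α k - ξ ≠ 0
  log_near : ∀ k, |Real.log (α k - ξ) + 2 * t (k + 2)| ≤ K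
  near_le : ∀ k, |α k - ξ| ≤ 1
  far_ge : ∀ k, 2 ≤ |β k - ξ|
  far_le : ∀ k, |β k - ξ| ≤ 4
  far_sub : ∀ k, |β (k + 2) - β k| ≤ Real.exp (-2 * t k + K)
  val_near_ne : ∀ k, quadVal (a k) (b k) (c k) (e k) (α (k + 1)) ≠ 0
  log_val_near : ∀ k,
    |Real.log (quadVal (a k) (b k) (c k) (e k) (α (k + 1))) + 2 * t (k + 1) + t k| ≤ K
  val_far_ne : ∀ k, quadVal (a k) (b k) (c k) (e k) (β (k + 1)) ≠ 0
  log_val_far : ∀ k, |Real.log (quadVal (a k) (b k) (c k) (e k) (β (k + 1))) - t k| ≤ K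
  irrational : ∀ m n : ℤ, n ≠ 0 →
    (m : ℝ) + n * ξ ≠ 0 ∧ -K - gold * Real.log n ≤ Real.log (m + n * ξ)

lemma gold_sq : gold ^ 2 = gold + 1 := by
  have h : √(5 : ℝ) ^ 2 = 5 := Real.sq_sqrt (by norm_num)
  rw [gold]
  linear_combination h / 4

lemma gold_gt : 1.618 < gold := by
  have h : (2.236 : ℝ) < √5 := Real.lt_sqrt_of_sq_lt (by norm_num)
  rw [gold]
  linarith

lemma gold_lt : gold < 1.619 := by
  have h : √5 < (2.238 : ℝ) := (Real.sqrt_lt' (by norm_num)).2 (by norm_num)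
  rw [gold]
  linarith

namespace MarkoffSeq

variable {ξ : ℝ} {x : ℕ → Matrix (Fin 2) (Fin 2) ℤ}

lemma sign_mul_self (k : ℕ) : ((-1 : ℤ) ^ k) * (-1) ^ k = 1 := by rw [← mul_pow]; norm_num

lemma rootPair (hx : MarkoffSeq ξ x) {k : ℕ} (hk : 1 ≤ k) :
    RootPair (x k 0 0) (x k 0 1) (x k 1 1) ((-1) ^ k) (nearRoot (x k 0 0) (x k 0 1) ((-1) ^ k))
      (farRoot (x k 0 0) (x k 0 1) ((-1) ^ k)) (largeUnit (x k 0 0)) (smallUnit (x k 0 0)) :=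
  rootPair_roots (hx.entry_ne_zero hk) (sign_mul_self k) (hx.det_entries hk)

/-- The roots of the `k`-th polynomial are close to `ξ` and `ξ ± 3`. -/
lemma exists_root_bounds (hx : MarkoffSeq ξ x) : ∃ C : ℝ, 1 ≤ C ∧ ∀ k, 1 ≤ k →
    |nearRoot (x k 0 0) (x k 0 1) ((-1) ^ k) - ξ| ≤ C / Xnorm x k ^ 2 ∧
    |farRoot (x k 0 0) (x k 0 1) ((-1) ^ k) - (ξ - 3 * (-1) ^ k)| ≤ C / Xnorm x k ^ 2 ∧
    |(x k 0 1 / x k 0 0 : ℝ) - ξ| + 1 / (x k 0 0 : ℝ) ^ 2 ≤ C / Xnorm x k ^ 2 := by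
  obtain ⟨c₁, c₂, c₃, h1, h2, h3, h⟩ := hx.2.2
  have hL : 1 ≤ 1 + ξ ^ 2 := by nlinarith [sq_nonneg ξ]
  refine ⟨c₃ * (1 + ξ ^ 2) + (1 + ξ ^ 2) ^ 2, by nlinarith, fun k hk => ?_⟩
  have hX := hx.one_le_Xnorm hk
  have hX0 : 0 < Xnorm x k := by linarith
  have ha := hx.entry_ne_zero hk
  have ha1 := hx.one_le_abs_entry hk
  have ha0 : (x k 0 0 : ℝ) ≠ 0 := by exact_mod_cast ha
  have hlt := hx.Xnorm_lt hk
  have e1 : 1 / |(x k 0 0 : ℝ)| ≤ (1 + ξ ^ 2) / Xnorm x k := by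
    rw [div_le_div_iff₀ (by linarith) hX0]; linarith
  have e2 : 1 / (x k 0 0 : ℝ) ^ 2 ≤ (1 + ξ ^ 2) ^ 2 / Xnorm x k ^ 2 := by
    rw [← sq_abs, ← div_pow, ← one_div_pow]
    exact pow_le_pow_left₀ (by positivity) e1 2
  have e3 : |(x k 0 1 / x k 0 0 : ℝ) - ξ| ≤ c₃ * (1 + ξ ^ 2) / Xnorm x k ^ 2 := by
    have : (x k 0 1 / x k 0 0 : ℝ) - ξ = -(x k 0 0 * ξ - x k 0 1) * (1 / x k 0 0) := by
      field_simp; ring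
    rw [this, abs_mul, abs_neg, abs_div, abs_one]
    calc _ ≤ c₃ / Xnorm x k * ((1 + ξ ^ 2) / Xnorm x k) := by
          gcongr
          exact (h k hk).2.1.1
      _ = _ := by field_simp
  have e4 : |(x k 0 1 / x k 0 0 : ℝ) - ξ| + 1 / (x k 0 0 : ℝ) ^ 2 ≤
      (c₃ * (1 + ξ ^ 2) + (1 + ξ ^ 2) ^ 2) / Xnorm x k ^ 2 := by
    rw [add_div]; linarith
  refine ⟨?_, ?_, e4⟩
  · have f1 := abs_nearRoot_sub_le (b := x k 0 1) ha (sign_mul_self k)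
    have f2 := abs_sub_le (nearRoot (x k 0 0) (x k 0 1) ((-1) ^ k)) (x k 0 1 / x k 0 0 : ℝ) ξ
    linarith
  · have f1 := abs_farRoot_sub_le (b := x k 0 1) ha (sign_mul_self k)
    have f2 := abs_sub_le (farRoot (x k 0 0) (x k 0 1) ((-1) ^ k))
      (x k 0 1 / x k 0 0 - 3 * ((-1 : ℤ) ^ k : ℤ) : ℝ) (ξ - 3 * (-1) ^ k)
    have f3 : (x k 0 1 / x k 0 0 - 3 * ((-1 : ℤ) ^ k : ℤ) : ℝ) - (ξ - 3 * (-1) ^ k) =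
      (x k 0 1 / x k 0 0 : ℝ) - ξ := by push_cast; ring
    rw [f3] at f2
    linarith

end MarkoffSeq

lemma abs_log_le_seven {y : ℝ} (h1 : 1 ≤ |y|) (h8 : |y| ≤ 8) : |Real.log y| ≤ 7 := by
  rw [← Real.log_abs, abs_of_nonneg (Real.log_nonneg h1)]
  have := Real.log_le_sub_one_of_pos (by linarith : 0 < |y|)
  linarith

namespace MarkoffSeq

variable {ξ : ℝ} {x : ℕ → Matrix (Fin 2) (Fin 2) ℤ}

theorem exists_approxSystem (hx : MarkoffSeq ξ x) (K₀ : ℝ) :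
    ∃ (K : ℝ) (a b c e : ℕ → ℤ) (t α β u u' : ℕ → ℝ),
      K₀ ≤ K ∧ ApproxSystem ξ K a b c e t α β u u' := by
  obtain ⟨Kg, hKg⟩ := hx.exists_growth
  obtain ⟨Ki, hKi⟩ := hx.exists_irrationality
  obtain ⟨C, hC1, hC⟩ := hx.exists_root_bounds
  have hg1 := gold_gt
  have hg2 := gold_lt
  set a : ℕ → ℤ := fun k => x k 0 0 with ha
  set b : ℕ → ℤ := fun k => x k 0 1 with hb
  set c : ℕ → ℤ := fun k => x k 1 1 with hc
  set e : ℕ → ℤ := fun k => (-1) ^ k with he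
  set t : ℕ → ℝ := fun k => Real.log (Xnorm x k) with ht
  set α : ℕ → ℝ := fun k => nearRoot (a k) (b k) (e k) with hα
  set β : ℕ → ℝ := fun k => farRoot (a k) (b k) (e k) with hβ
  set ℓ : ℝ := Real.log (1 + ξ ^ 2) with hℓ
  have hℓ0 : 0 ≤ ℓ := Real.log_nonneg (by nlinarith [sq_nonneg ξ])
  have hC0 : 0 ≤ Real.log C := Real.log_nonneg hC1
  have hKg0 : 0 ≤ Kg := (abs_nonneg _).trans (hKg 1 le_rfl)
  have hstep : ∀ k, 1 ≤ k → MarkoffStep (a k) (b k) (c k) (a (k + 1)) (b (k + 1)) (c (k + 1))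
      (a (k + 2)) (b (k + 2)) ((-1) ^ k) := fun k hk => hx.step hk
  have hpair : ∀ k, 1 ≤ k → RootPair (a k) (b k) (c k) (e k) (α k) (β k)
      (largeUnit (a k)) (smallUnit (a k)) := fun k hk => hx.rootPair hk
  have hane : ∀ k, 1 ≤ k → a k ≠ 0 := fun k hk => hx.entry_ne_zero hk
  have hane' : ∀ k, 1 ≤ k → (a k : ℝ) ≠ 0 := fun k hk => by exact_mod_cast hane k hk
  have hexp : ∀ k, 1 ≤ k → C / Xnorm x k ^ 2 = Real.exp (Real.log C - 2 * t k) := by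
    intro k hk
    have hX := hx.one_le_Xnorm hk
    rw [Real.exp_sub, Real.exp_log (by linarith), mul_comm, Real.exp_mul, Real.exp_log (by linarith)]
    norm_num
  have hloga : ∀ k, 1 ≤ k → |Real.log (a k) - t k| ≤ ℓ := by
    intro k hk
    have hX := hx.one_le_Xnorm hk
    have h1 := Real.log_le_log (by linarith [hx.one_le_abs_entry hk]) (abs_entry_le_Xnorm x k)
    have h2 := Real.log_le_log (by linarith) (hx.Xnorm_lt hk).le
    rw [Real.log_mul (by nlinarith [sq_nonneg ξ]) (abs_pos.2 (hane' k hk)).ne', Real.log_abs] at h2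
    rw [Real.log_abs] at h1
    rw [abs_le]
    constructor <;> linarith
  have hlogu : ∀ k, 1 ≤ k → largeUnit (a k) ≠ 0 ∧ |Real.log (largeUnit (a k)) - t k| ≤ ℓ + 2 := by
    intro k hk
    have hpos : 0 < |(a k : ℝ)| := abs_pos.2 (hane' k hk)
    have h1 := abs_le_abs_largeUnit (a k)
    have h2 := abs_largeUnit_le (a k)
    have hne : largeUnit (a k) ≠ 0 := abs_pos.1 (hpos.trans_le h1)
    have h3 := Real.log_le_log hpos h1
    have h4 := Real.log_le_log (abs_pos.2 hne) h2
    rw [Real.log_mul (by norm_num) hpos.ne', Real.log_abs, Real.log_abs] at h4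
    rw [Real.log_abs, Real.log_abs] at h3
    have h5 := Real.log_le_sub_one_of_pos (by norm_num : (0 : ℝ) < 3)
    have h6 := abs_le.1 (hloga k hk)
    refine ⟨hne, ?_⟩
    rw [abs_le]
    constructor <;> linarith
  have hlogu' : ∀ k, 1 ≤ k → smallUnit (a k) ≠ 0 ∧ |Real.log (smallUnit (a k)) + t k| ≤ ℓ + 2 := by
    intro k hk
    obtain ⟨h1, h2⟩ := hlogu k hk
    have h3 := largeUnit_mul_smallUnit (hane k hk)
    have hne : smallUnit (a k) ≠ 0 := right_ne_zero_of_mul_eq_one h3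
    refine ⟨hne, ?_⟩
    have h4 := congrArg Real.log h3
    rw [Real.log_mul h1 hne, Real.log_one] at h4
    rw [← abs_neg]
    convert h2 using 2
    linarith
  have htend := hx.tendsto_log_Xnorm
  set K : ℝ := 10 * (Kg + |Ki| + |K₀| + Real.log C + 3 * ℓ + 100) with hK
  obtain ⟨N, hN⟩ := Filter.eventually_atTop.1 (htend.eventually_ge_atTop (10000 * K))
  have habsKi := abs_nonneg Ki
  have habsK₀ := abs_nonneg K₀
  have hK₀' := le_abs_self K₀
  have hKi' := le_abs_self Ki
  have hlarge : ∀ k, N ≤ k → 10000 * K ≤ t k := hN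
  have hsmall : ∀ k, 1 ≤ k → N ≤ k → C / Xnorm x k ^ 2 ≤ 1 / 10 := by
    intro k hk hNk
    rw [hexp k hk]
    have h1 := hlarge k hNk
    have h2 : Real.log C - 2 * t k ≤ -10 := by linarith
    have h3 := Real.exp_le_exp.2 h2
    have h4 := Real.add_one_le_exp (10 : ℝ)
    rw [Real.exp_neg] at h3
    have h5 : (Real.exp 10)⁻¹ ≤ 10⁻¹ := inv_anti₀ (by norm_num) (by linarith)
    linarith
  have hsign : ∀ k, (-1 : ℝ) ^ k = 1 ∨ (-1 : ℝ) ^ k = -1 := neg_one_pow_eq_or ℝ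
  have hnear : ∀ k, 1 ≤ k → N ≤ k → |α k - ξ| ≤ 1 / 10 := fun k hk hNk =>
    (hC k hk).1.trans (hsmall k hk hNk)
  have hfar : ∀ k, 1 ≤ k → N ≤ k → |β k - (ξ - 3 * (-1) ^ k)| ≤ 1 / 10 := fun k hk hNk =>
    (hC k hk).2.1.trans (hsmall k hk hNk)
  have hratio : ∀ k, 1 ≤ k → N ≤ k → |(b k / a k : ℝ) - ξ| ≤ 1 / 10 := fun k hk hNk => by
    have h1 := (hC k hk).2.2.trans (hsmall k hk hNk)
    have h2 : 0 ≤ 1 / (a k : ℝ) ^ 2 := by positivity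
    exact (by linarith : |(x k 0 1 / x k 0 0 : ℝ) - ξ| ≤ 1 / 10)
  have hfarξ : ∀ k, 1 ≤ k → N ≤ k → ∀ y, |y - ξ| ≤ 1 / 10 → 2 ≤ |y - β k| ∧ |y - β k| ≤ 4 := by
    intro k hk hNk y hy
    have h1 := abs_le.1 (hfar k hk hNk)
    have h2 := abs_le.1 hy
    rw [le_abs, abs_le]
    rcases hsign k with h | h <;> rw [h] at h1
    · exact ⟨Or.inl (by linarith), by linarith, by linarith⟩
    · exact ⟨Or.inr (by linarith), by linarith, by linarith⟩
  have hfarfar : ∀ k, 1 ≤ k → N ≤ k → 1 ≤ |β (k + 1) - β k| ∧ |β (k + 1) - β k| ≤ 8 := by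
    intro k hk hNk
    have h1 := abs_le.1 (hfar k hk hNk)
    have h2 := abs_le.1 (hfar (k + 1) (by omega) (by omega))
    rw [pow_succ] at h2
    rw [le_abs, abs_le]
    rcases hsign k with h | h <;> rw [h] at h1 h2
    · exact ⟨Or.inl (by linarith), by linarith, by linarith⟩
    · exact ⟨Or.inr (by linarith), by linarith, by linarith⟩
  have hupper : ∀ k, 1 ≤ k → N ≤ k → |α k - ξ| ≤ Real.exp (Real.log C - 2 * t (k + 2)) := by
    intro k hk hNk
    rw [← hexp (k + 2) (by omega)]
    refine le_trans ?_ (hC (k + 2) (by omega)).2.2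
    have h1 := (hstep k hk).quad_snd_div_fst (hane' k hk) (hane' (k + 2) (by omega))
    have h2 := (hpair k hk).quadVal_eq (b (k + 2) / a (k + 2))
    rw [quadVal] at h2
    push_cast [he] at h2
    rw [h1] at h2
    have h3 := (hfarξ k hk hNk _ (hratio (k + 2) (by omega) (by omega))).1
    have h4 : (b (k + 2) / a (k + 2) - α k : ℝ) * (b (k + 2) / a (k + 2) - β k) =
        -(1 / (a (k + 2) : ℝ) ^ 2) := by
      apply mul_left_cancel₀ (hane' k hk)
      rw [← mul_assoc, ← h2]; ring
    have h5 := congrArg abs h4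
    rw [abs_mul, abs_neg, abs_of_nonneg (by positivity : 0 ≤ 1 / (a (k + 2) : ℝ) ^ 2)] at h5
    have h6 : |(b (k + 2) / a (k + 2) - α k : ℝ)| ≤ 1 / (a (k + 2) : ℝ) ^ 2 := by
      nlinarith [abs_nonneg (b (k + 2) / a (k + 2) - α k : ℝ)]
    have h7 := abs_sub_le (α k) (b (k + 2) / a (k + 2) : ℝ) ξ
    rw [abs_sub_comm (α k) (_ / _)] at h7
    exact (by linarith : |α k - ξ| ≤ |(b (k + 2) / a (k + 2) : ℝ) - ξ| + 1 / (a (k + 2) : ℝ) ^ 2)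
  have hvalfar : ∀ k, 1 ≤ k → N ≤ k → quadVal (a k) (b k) (c k) (e k) (β (k + 1)) ≠ 0 ∧
      |Real.log (quadVal (a k) (b k) (c k) (e k) (β (k + 1))) - t k| ≤ ℓ + 14 := by
    intro k hk hNk
    obtain ⟨h1, h2⟩ := hfarfar k hk hNk
    have h3 : 1 ≤ |β (k + 1) - α k| ∧ |β (k + 1) - α k| ≤ 8 := by
      obtain ⟨i, j⟩ := hfarξ (k + 1) (by omega) (by omega) _ (hnear k hk hNk)
      rw [abs_sub_comm] at i j
      constructor <;> linarith
    have n1 : β (k + 1) - β k ≠ 0 := abs_pos.1 (by linarith)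
    have n2 : β (k + 1) - α k ≠ 0 := abs_pos.1 (by linarith)
    rw [(hpair k hk).quadVal_eq]
    refine ⟨mul_ne_zero (mul_ne_zero (hane' k hk) n2) n1, ?_⟩
    rw [Real.log_mul (mul_ne_zero (hane' k hk) n2) n1, Real.log_mul (hane' k hk) n2]
    have l1 := abs_le.1 (abs_log_le_seven h1 h2)
    have l2 := abs_le.1 (abs_log_le_seven h3.1 h3.2)
    have l3 := abs_le.1 (hloga k hk)
    rw [abs_le]
    constructor <;> linarith
  have hvalnear : ∀ k, 1 ≤ k → N ≤ k → quadVal (a k) (b k) (c k) (e k) (α (k + 1)) ≠ 0 ∧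
      |Real.log (quadVal (a k) (b k) (c k) (e k) (α (k + 1))) + 2 * t (k + 1) + t k|
        ≤ 3 * ℓ + 21 := by
    intro k hk hNk
    have hp := hpair (k + 1) (by omega)
    have h1 := (hstep k hk).resultant (θ := α (k + 1)) (θ' := β (k + 1))
      (hane' (k + 1) (by omega))
      (by have := hp.sum_roots; push_cast [he, pow_succ] at this; linear_combination this)
      (by have := hp.mul_roots; push_cast [he, pow_succ] at this; linear_combination this)
    obtain ⟨n2, h2⟩ := hvalfar k hk hNk
    have hval : ∀ y, (a k : ℝ) * y ^ 2 + (3 * (-1) ^ k * a k - 2 * b k) * y +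
        (c k - 3 * (-1) ^ k * b k) = quadVal (a k) (b k) (c k) (e k) y := by
      intro y; rw [quadVal]; push_cast [he]; ring
    rw [hval, hval] at h1
    have n1 : quadVal (a k) (b k) (c k) (e k) (α (k + 1)) ≠ 0 := by
      intro h0; rw [h0] at h1; norm_num at h1
    have n3 := hane' (k + 1) (by omega)
    refine ⟨n1, ?_⟩
    have h3 := congrArg Real.log h1
    rw [Real.log_mul (pow_ne_zero 2 n3) (mul_ne_zero n1 n2), Real.log_mul n1 n2, Real.log_pow] at h3
    have l1 := abs_le.1 (abs_log_le_seven (y := -4) (by norm_num) (by norm_num))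
    have l2 := abs_le.1 h2
    have l3 := abs_le.1 (hloga (k + 1) (by omega))
    push_cast at h3
    rw [abs_le]
    constructor <;> linarith
  have hlogD : ∀ k, 1 ≤ k → N ≤ k → α k - ξ ≠ 0 ∧ |Real.log (α k - ξ) + 2 * t (k + 2)| ≤ K := by
    intro k hk hNk
    obtain ⟨n1, h1⟩ := hvalnear k hk hNk
    have g0 := abs_le.1 (hKg k hk)
    have g1 := abs_le.1 (hKg (k + 1) (by omega))
    have g2 := abs_le.1 (hKg (k + 2) (by omega))
    have T0 := hlarge k hNk
    have T1 := hlarge (k + 1) (by omega)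
    have T2 := hlarge (k + 2) (by omega)
    have hfib : |t (k + 2) - t (k + 1) - t k| ≤ 2 * Kg := by
      have e1 : t (k + 2) - t (k + 1) - t k =
          (t (k + 2) - gold * t (k + 1)) + (gold - 1) * (t (k + 1) - gold * t k) := by
        linear_combination t k * gold_sq
      rw [e1]
      refine (abs_add_le _ _).trans ?_
      rw [abs_mul, abs_of_pos (by linarith : 0 < gold - 1)]
      have e2 := hKg k hk
      have e3 := hKg (k + 1) (by omega)
      have e4 : (gold - 1) * |t (k + 1) - gold * t k| ≤ 1 * Kg :=
        mul_le_mul (by linarith) e2 (abs_nonneg _) (by norm_num)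
      linarith
    have f0 := abs_le.1 hfib
    have hg3 : 1.618 * t (k + 2) ≤ gold * t (k + 2) := by gcongr; linarith
    rw [(hpair k hk).quadVal_eq] at n1 h1
    have m1 : α (k + 1) - α k ≠ 0 := right_ne_zero_of_mul (left_ne_zero_of_mul n1)
    have m2 : α (k + 1) - β k ≠ 0 := right_ne_zero_of_mul n1
    rw [Real.log_mul (left_ne_zero_of_mul n1) m2, Real.log_mul (hane' k hk) m1] at h1
    obtain ⟨d1, d2⟩ := hfarξ k hk hNk _ (hnear (k + 1) (by omega) (by omega))
    have l1 := abs_le.1 (abs_log_le_seven (by linarith) (by linarith : |α (k + 1) - β k| ≤ 8))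
    have l2 := abs_le.1 (hloga k hk)
    have l3 := abs_le.1 h1
    have l4 : -2 * t (k + 2) - 4 * Kg - 4 * ℓ - 28 ≤ Real.log (α (k + 1) - α k) := by linarith
    have l5 : Real.exp (-2 * t (k + 2) - 4 * Kg - 4 * ℓ - 28) ≤ |α (k + 1) - α k| := by
      rw [← Real.exp_log (abs_pos.2 m1), Real.log_abs]
      exact Real.exp_le_exp.2 l4
    have l6 := hupper (k + 1) (by omega) (by omega)
    have l7 : Real.exp (Real.log C - 2 * t (k + 1 + 2)) ≤
        Real.exp (-2 * t (k + 2) - 4 * Kg - 4 * ℓ - 28 - 1) := by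
      apply Real.exp_le_exp.2
      have : t (k + 1 + 2) = t (k + 2 + 1) := rfl
      rw [this]
      linarith
    have l8 : Real.exp (-2 * t (k + 2) - 4 * Kg - 4 * ℓ - 28 - 1) * 2 ≤
        Real.exp (-2 * t (k + 2) - 4 * Kg - 4 * ℓ - 28) := by
      rw [Real.exp_sub _ 1, div_mul_eq_mul_div, div_le_iff₀ (Real.exp_pos _)]
      have := Real.add_one_le_exp (1 : ℝ)
      gcongr
      linarith
    have l9 := abs_sub_le (α (k + 1)) ξ (α k)
    rw [abs_sub_comm ξ] at l9
    have l10 : Real.exp (-2 * t (k + 2) - 4 * Kg - 4 * ℓ - 28 - 1) ≤ |α k - ξ| := by linarith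
    have hne : α k - ξ ≠ 0 := abs_pos.1 ((Real.exp_pos _).trans_le l10)
    refine ⟨hne, ?_⟩
    have u1 := hupper k hk hNk
    rw [← Real.exp_log (abs_pos.2 hne), Real.exp_le_exp, Real.log_abs] at u1 l10
    rw [abs_le]
    constructor <;> linarith
  refine ⟨K, fun k => a (k + (N + 1)), fun k => b (k + (N + 1)), fun k => c (k + (N + 1)),
    fun k => e (k + (N + 1)), fun k => t (k + (N + 1)), fun k => α (k + (N + 1)),
    fun k => β (k + (N + 1)), fun k => largeUnit (a (k + (N + 1))),
    fun k => smallUnit (a (k + (N + 1))), by linarith, ?_⟩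
  have i1 : ∀ k, 1 ≤ k + (N + 1) := fun k => by omega
  have i2 : ∀ k, N ≤ k + (N + 1) := fun k => by omega
  have s1 : ∀ k, k + 1 + (N + 1) = k + (N + 1) + 1 := fun k => by omega
  have s2 : ∀ k, k + 2 + (N + 1) = k + (N + 1) + 2 := fun k => by omega
  refine
  { one_le := by linarith
    large := fun k => hlarge _ (i2 k)
    growth := fun k => by
      simp only [s1]
      exact (hKg _ (i1 k)).trans (by linarith)
    pair := fun k => hpair _ (i1 k)
    a_ne := fun k => hane _ (i1 k)
    log_a := fun k => (hloga _ (i1 k)).trans (by linarith)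
    u_ne := fun k => (hlogu _ (i1 k)).1
    log_u := fun k => (hlogu _ (i1 k)).2.trans (by linarith)
    u'_ne := fun k => (hlogu' _ (i1 k)).1
    log_u' := fun k => (hlogu' _ (i1 k)).2.trans (by linarith)
    near_ne := fun k => (hlogD _ (i1 k) (i2 k)).1
    log_near := fun k => by
      simp only [s2]
      exact (hlogD _ (i1 k) (i2 k)).2
    near_le := fun k => (hnear _ (i1 k) (i2 k)).trans (by norm_num)
    far_ge := fun k => by
      rw [abs_sub_comm]
      exact (hfarξ _ (i1 k) (i2 k) ξ (by norm_num)).1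
    far_le := fun k => by
      rw [abs_sub_comm]
      exact (hfarξ _ (i1 k) (i2 k) ξ (by norm_num)).2
    far_sub := fun k => ?_
    val_near_ne := fun k => by
      simp only [s1]
      exact (hvalnear _ (i1 k) (i2 k)).1
    log_val_near := fun k => by
      simp only [s1]
      exact (hvalnear _ (i1 k) (i2 k)).2.trans (by linarith)
    val_far_ne := fun k => by
      simp only [s1]
      exact (hvalfar _ (i1 k) (i2 k)).1
    log_val_far := fun k => by
      simp only [s1]
      exact (hvalfar _ (i1 k) (i2 k)).2.trans (by linarith)
    irrational := fun m n hn => ⟨(hKi m n hn).1, le_trans (by linarith) (hKi m n hn).2⟩ }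
  simp only [s2]
  generalize hj : k + (N + 1) = j
  have hj1 : 1 ≤ j := by omega
  have hjN : N ≤ j := by omega
  have r1 := (hC j hj1).2.1
  have r2 := (hC (j + 2) (by omega)).2.1
  rw [hexp _ (by omega)] at r1 r2
  have hpow : (-1 : ℝ) ^ (j + 2) = (-1) ^ j := by rw [pow_add]; norm_num
  rw [hpow] at r2
  have r3 := abs_sub_le (β (j + 2)) (ξ - 3 * (-1) ^ j) (β j)
  rw [abs_sub_comm (ξ - 3 * (-1) ^ j)] at r3
  have g0 := abs_le.1 (hKg j hj1)
  have g1 := abs_le.1 (hKg (j + 1) (by omega))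
  have T0 := hlarge j hjN
  have T1 := hlarge (j + 1) (by omega)
  have hg3 : 1.618 * t j ≤ gold * t j := by gcongr; linarith
  have hg4 : 1.618 * t (j + 1) ≤ gold * t (j + 1) := by gcongr; linarith
  have r4 : Real.exp (Real.log C - 2 * t (j + 2)) ≤ Real.exp (Real.log C - 2 * t j) := by
    apply Real.exp_le_exp.2
    have : t (j + 2) = t (j + 1 + 1) := rfl
    rw [this]
    linarith
  have r5 : Real.exp (Real.log C - 2 * t j) * 2 ≤ Real.exp (-2 * t j + K) := by
    have : -2 * t j + K = (Real.log C - 2 * t j) + (K - Real.log C) := by ring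
    rw [this, Real.exp_add]
    have := Real.add_one_le_exp (K - Real.log C)
    gcongr
    linarith
  refine r3.trans ?_
  have r1' : |β j - (ξ - 3 * (-1) ^ j)| ≤ Real.exp (Real.log C - 2 * t j) := r1
  have r2' : |β (j + 2) - (ξ - 3 * (-1) ^ j)| ≤ Real.exp (Real.log C - 2 * t (j + 2)) := r2
  linarith

end MarkoffSeq

/-- Bounds, in terms of the logarithmic height `h`, for the values of an integer polynomial
near `ξ`. -/
structure PolyBound (ξ K : ℝ) (R : ℤ[X]) (h : ℝ) : Prop where
  ne_zero : R ≠ 0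
  nonneg : 0 ≤ h
  lead : |(R.leadingCoeff : ℝ)| ≤ Real.exp h
  value : ∀ y, |y - ξ| ≤ 20 → |aeval y R| ≤ Real.exp (h + K)
  increment : ∀ y z, |y - ξ| ≤ 20 → |z - ξ| ≤ 20 →
    |aeval y R - aeval z R| ≤ Real.exp (h + K) * |y - z|
  expansion : ∃ ρ : ℝ, ∀ y, |y - ξ| ≤ 20 →
    |aeval y R - aeval ξ R - ρ * (y - ξ)| ≤ Real.exp (h + K) * (y - ξ) ^ 2

lemma exists_polyBound (ξ : ℝ) : ∃ K₀ : ℝ, ∀ K, K₀ ≤ K → ∀ R : ℤ[X], R ≠ 0 → R.natDegree ≤ 6 →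
    PolyBound ξ K R (Real.log (polyNorm R)) := by
  obtain ⟨C, hC1, hC⟩ := exists_aeval_bound ξ (|ξ| + 20) (by linarith [abs_nonneg ξ])
    (by linarith)
  refine ⟨Real.log C, fun K hK R hR hdeg => ?_⟩
  have hH := one_le_polyNorm hR
  obtain ⟨h1, h2, ρ, h3⟩ := hC R hdeg
  have hle : C * polyNorm R ≤ Real.exp (Real.log (polyNorm R) + K) := by
    rw [Real.exp_add, Real.exp_log (by linarith), mul_comm]
    gcongr
    rw [← Real.exp_log (by linarith : 0 < C)]
    exact Real.exp_le_exp.2 hK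
  have hball : ∀ y : ℝ, |y - ξ| ≤ 20 → |y| ≤ |ξ| + 20 := fun y hy => by
    have := abs_sub_abs_le_abs_sub y ξ
    linarith
  refine ⟨hR, Real.log_nonneg hH, ?_, fun y hy => (h1 y (hball y hy)).trans hle,
    fun y z hy hz => (h2 y z (hball y hy) (hball z hz)).trans (by gcongr), ρ,
    fun y hy => (h3 y (hball y hy)).trans (by gcongr)⟩
  rw [Real.exp_log (by linarith)]
  exact abs_coeff_le_polyNorm R _

lemma abs_mul_le_exp {A w s q : ℝ} (hA : A ≠ 0) (hs : Real.log A ≤ s) (hw : |w| ≤ Real.exp q) :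
    |A * w| ≤ Real.exp (s + q) := by
  rw [abs_mul, Real.exp_add]
  refine mul_le_mul ?_ hw (abs_nonneg _) (Real.exp_pos _).le
  rw [← Real.exp_log (abs_pos.2 hA), Real.log_abs]
  exact Real.exp_le_exp.2 hs

lemma log_le_of_abs_le_exp {y s : ℝ} (hy : y ≠ 0) (h : |y| ≤ Real.exp s) : Real.log y ≤ s := by
  rwa [← Real.exp_log (abs_pos.2 hy), Real.log_abs, Real.exp_le_exp] at h

lemma abs_eq_exp_log {y : ℝ} (hy : y ≠ 0) : |y| = Real.exp (Real.log y) := by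
  rw [← Real.log_abs, Real.exp_log (abs_pos.2 hy)]

lemma two_mul_exp_le {r s : ℝ} (h : r + 1 ≤ s) : 2 * Real.exp r ≤ Real.exp s := by
  have h1 := Real.exp_le_exp.2 h
  rw [Real.exp_add] at h1
  have h2 := Real.add_one_le_exp (1 : ℝ)
  nlinarith [Real.exp_pos r]

lemma exp_add_exp_le {r r' s : ℝ} (h : r + 1 ≤ s) (h' : r' + 1 ≤ s) :
    Real.exp r + Real.exp r' ≤ Real.exp s := by
  have h1 := two_mul_exp_le h'
  have h2 := two_mul_exp_le h
  linarith

/-- If `y` is close to `z` then `log |y|` is close to `log |z|`. -/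
lemma abs_log_sub_log_le {y z r r' : ℝ} (hz : z ≠ 0) (h : |y - z| ≤ Real.exp r + Real.exp r')
    (hr : r + 2 ≤ Real.log z) (hr' : r' + 2 ≤ Real.log z) :
    y ≠ 0 ∧ |Real.log y - Real.log z| ≤ 1 := by
  have h1 : Real.exp r + Real.exp r' ≤ Real.exp (Real.log z - 1) :=
    exp_add_exp_le (by linarith) (by linarith)
  have h2 : 2 * Real.exp (Real.log z - 1) ≤ |z| := by
    rw [abs_eq_exp_log hz]
    exact two_mul_exp_le (by linarith)
  have hz' := abs_pos.2 hz
  have h3 := abs_sub_abs_le_abs_sub y z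
  have h4 := abs_sub_abs_le_abs_sub z y
  rw [abs_sub_comm z y] at h4
  have hy : y ≠ 0 := abs_pos.1 (by linarith)
  refine ⟨hy, ?_⟩
  have h5 : |y| ≤ Real.exp (Real.log z + 1) := by
    rw [abs_eq_exp_log hz] at h2 h3
    have := two_mul_exp_le (r := Real.log z) le_rfl
    linarith
  have h6 : |z| ≤ Real.exp (Real.log y + 1) := by
    have := two_mul_exp_le (r := Real.log y) le_rfl
    rw [← abs_eq_exp_log hy] at this
    linarith
  have h7 := log_le_of_abs_le_exp hy h5
  have h8 := log_le_of_abs_le_exp hz h6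
  rw [abs_le]
  constructor <;> linarith

lemma log_unit_mul_pow {v A P : ℝ} (hv : v ≠ 0) (hA : A ≠ 0) (hP : P ≠ 0) (i j : ℕ) :
    v ^ i * (A ^ (2 * j) * P ^ j) ≠ 0 ∧ Real.log (v ^ i * (A ^ (2 * j) * P ^ j)) =
      i * Real.log v + 2 * j * Real.log A + j * Real.log P := by
  have h1 := pow_ne_zero i hv
  have h2 := pow_ne_zero (2 * j) hA
  have h3 := pow_ne_zero j hP
  refine ⟨mul_ne_zero h1 (mul_ne_zero h2 h3), ?_⟩
  rw [Real.log_mul h1 (mul_ne_zero h2 h3), Real.log_mul h2 h3, Real.log_pow, Real.log_pow,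
    Real.log_pow]
  push_cast
  ring

lemma eq_zero_of_mem_combGroup {y y' v v' : ℝ} (hm : (v, v') ∈ combGroup y y')
    (hy : 1 ≤ |y - y'|) (hv : |v| ≤ Real.exp (-2)) (hv' : |v'| ≤ Real.exp (-2)) :
    v = 0 ∧ v' = 0 := by
  obtain ⟨m, n, h1, h2⟩ := mem_combGroup.1 hm
  simp only at h1 h2
  have h4 : 4 * Real.exp (-2) ≤ 1 := by
    have i1 := two_mul_exp_le (r := -2) (s := -1) (by norm_num)
    have i2 := two_mul_exp_le (r := -1) (s := 0) (by norm_num)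
    rw [Real.exp_zero] at i2
    linarith
  have hn : n = 0 := by
    by_contra hn
    have hn1 : 1 ≤ |(n : ℝ)| := by exact_mod_cast Int.one_le_abs hn
    have h3 : v - v' = n * (y - y') := by rw [h1, h2]; ring
    have h5 : |v - v'| = |(n : ℝ)| * |y - y'| := by rw [h3, abs_mul]
    have h6 := abs_sub v v'
    nlinarith
  subst hn
  simp only [Int.cast_zero, zero_mul, add_zero] at h1 h2
  have hm0 : m = 0 := by
    by_contra hm0
    have hm1 : 1 ≤ |(m : ℝ)| := by exact_mod_cast Int.one_le_abs hm0
    rw [h1] at hv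
    linarith
  subst hm0
  simpa using And.intro h1 h2

lemma exists_intCast_eq_of_mem_combGroup {y y' v v' : ℝ} (hm : (v, v') ∈ combGroup y y')
    (hv : |v| + |v'| < |y - y'|) : ∃ m : ℤ, v = m ∧ v' = m := by
  obtain ⟨m, n, h1, h2⟩ := mem_combGroup.1 hm
  simp only at h1 h2
  have hn : n = 0 := by
    by_contra hn
    have hn1 : 1 ≤ |(n : ℝ)| := by exact_mod_cast Int.one_le_abs hn
    have h3 : v - v' = n * (y - y') := by rw [h1, h2]; ring
    have h5 : |v - v'| = |(n : ℝ)| * |y - y'| := by rw [h3, abs_mul]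
    have h6 := abs_sub v v'
    nlinarith [abs_nonneg (y - y')]
  subst hn
  exact ⟨m, by simpa using h1, by simpa using h2⟩

namespace RootPair

variable {a b c e : ℤ} {θ θ' u u' : ℝ}

lemma pow_mem (h : RootPair a b c e θ θ' u u') {z : ℝ × ℝ} (hz : z ∈ combGroup u u') (i : ℕ) :
    z ^ i ∈ combGroup u u' := by
  induction i with
  | zero =>
    rw [pow_zero]
    exact mem_combGroup.2 ⟨1, 0, by simp, by simp⟩
  | succ i ih => rw [pow_succ]; exact h.mul_mem ih hz

end RootPair

namespace ApproxSystem

variable {ξ K : ℝ} {a b c e : ℕ → ℤ} {t α β u u' : ℕ → ℝ}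

lemma growth_ge (S : ApproxSystem ξ K a b c e t α β u u') (k : ℕ) : 1.6179 * t k ≤ t (k + 1) := by
  have h1 := abs_le.1 (S.growth k)
  have h2 := S.large k
  have h3 := S.one_le
  have h4 : 1.618 * t k ≤ gold * t k := mul_le_mul_of_nonneg_right gold_gt.le (by linarith)
  linarith

lemma growth_le (S : ApproxSystem ξ K a b c e t α β u u') (k : ℕ) : t (k + 1) ≤ 1.6191 * t k := by
  have h1 := abs_le.1 (S.growth k)
  have h2 := S.large k
  have h3 := S.one_le
  have h4 : gold * t k ≤ 1.619 * t k := mul_le_mul_of_nonneg_right gold_lt.le (by linarith)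
  linarith

lemma fib (S : ApproxSystem ξ K a b c e t α β u u') (k : ℕ) :
    |t (k + 2) - t (k + 1) - t k| ≤ 2 * K := by
  have e1 : t (k + 2) - t (k + 1) - t k =
      (t (k + 2) - gold * t (k + 1)) + (gold - 1) * (t (k + 1) - gold * t k) := by
    linear_combination t k * gold_sq
  have hg1 := gold_gt
  have hg2 := gold_lt
  rw [e1]
  refine (abs_add_le _ _).trans ?_
  rw [abs_mul, abs_of_pos (by linarith : 0 < gold - 1)]
  have e2 := S.growth k
  have e3 := S.growth (k + 1)
  have e4 : (gold - 1) * |t (k + 1) - gold * t k| ≤ 1 * K :=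
    mul_le_mul (by linarith) e2 (abs_nonneg _) (by norm_num)
  linarith

lemma one_le_abs_sub (S : ApproxSystem ξ K a b c e t α β u u') (k : ℕ) : 1 ≤ |α k - β k| := by
  have h1 := abs_le.1 (S.near_le k)
  have h2 := S.far_ge k
  have h3 := abs_sub_le (β k) (α k) ξ
  rw [abs_sub_comm (β k) (α k)] at h3
  have := S.near_le k
  linarith

/-- The two members of the pair attached to a polynomial of even degree. -/
lemma mem_even (S : ApproxSystem ξ K a b c e t α β u u') (k i j : ℕ) {R : ℤ[X]}
    (hR : R.natDegree ≤ 2 * j) :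
    (u' (k + 1) ^ i * ((a (k + 1) : ℝ) ^ (2 * j) *
        quadVal (a k) (b k) (c k) (e k) (β (k + 1)) ^ j) * aeval (α (k + 1)) R,
      u (k + 1) ^ i * ((a (k + 1) : ℝ) ^ (2 * j) *
        quadVal (a k) (b k) (c k) (e k) (α (k + 1)) ^ j) * aeval (β (k + 1)) R)
      ∈ combGroup (u (k + 1)) (u' (k + 1)) := by
  have hp := S.pair (k + 1)
  have h1 := hp.mul_mem (hp.pow_mem hp.swap_mem i) (hp.aeval_mem_even (a k) (3 * e k * a k - 2 * b k)
    (c k - 3 * e k * b k) j R hR)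
  convert h1 using 1
  ext <;> simp only [quadVal, Prod.fst_mul, Prod.snd_mul, Prod.pow_fst, Prod.pow_snd, mul_assoc]

lemma mem_odd (S : ApproxSystem ξ K a b c e t α β u u') (k j : ℕ) {R : ℤ[X]}
    (hR : R.natDegree ≤ 2 * j + 1) {z z' : ℝ}
    (hz : (z, z') ∈ combGroup (u (k + 1)) (u' (k + 1))) (i : ℕ) :
    (z ^ i * ((a (k + 1) : ℝ) ^ (2 * j) *
        quadVal (a k) (b k) (c k) (e k) (β (k + 1)) ^ j) * aeval (α (k + 1)) R,
      z' ^ i * ((a (k + 1) : ℝ) ^ (2 * j) *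
        quadVal (a k) (b k) (c k) (e k) (α (k + 1)) ^ j) * aeval (β (k + 1)) R)
      ∈ combGroup (α (k + 1)) (β (k + 1)) := by
  have hp := S.pair (k + 1)
  have h1 := hp.mul_mem_root (hp.pow_mem hz i) (hp.aeval_mem_odd (a k) (3 * e k * a k - 2 * b k)
    (c k - 3 * e k * b k) j R hR)
  convert h1 using 1
  ext <;> simp only [quadVal, Prod.fst_mul, Prod.snd_mul, Prod.pow_fst, Prod.pow_snd, mul_assoc]

/-- A polynomial vanishing at both roots of the `k`-th quadratic polynomial has large height. -/
lemma le_of_aeval_eq_zero (S : ApproxSystem ξ K a b c e t α β u u') {k : ℕ} {R : ℤ[X]} {h : ℝ}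
    (P : PolyBound ξ K R h) (hα : aeval (α k) R = 0) (hβ : aeval (β k) R = 0) :
    t k ≤ h + 2 * K := by
  have hne : α k ≠ β k := fun h0 => by
    have := S.one_le_abs_sub k
    rw [h0, sub_self, abs_zero] at this
    linarith
  obtain ⟨A, hA⟩ := (S.pair k).exists_quadPoly_mul_eq (S.a_ne k) hne hα hβ
  have hlead := congrArg leadingCoeff hA
  have hq : (quadPoly (a k) (b k) (c k) (e k)).leadingCoeff = a k :=
    leadingCoeff_quadratic (S.a_ne k)
  rw [leadingCoeff_mul, leadingCoeff_mul, leadingCoeff_C, hq] at hlead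
  have hR0 : R.leadingCoeff ≠ 0 := leadingCoeff_ne_zero.2 P.ne_zero
  have hdvd : a k ∣ 2 * R.leadingCoeff := ⟨_, hlead.symm⟩
  have hle := Int.le_of_dvd (abs_pos.2 (mul_ne_zero two_ne_zero hR0))
    ((dvd_abs _ _).2 ((abs_dvd _ _).2 hdvd))
  have hle' : |(a k : ℝ)| ≤ 2 * |(R.leadingCoeff : ℝ)| := by
    rw [abs_mul] at hle
    exact_mod_cast hle
  have h1 := P.lead
  have h2 := two_mul_exp_le (r := h) le_rfl
  have h3 := log_le_of_abs_le_exp (by exact_mod_cast S.a_ne k : (a k : ℝ) ≠ 0)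
    (by linarith : |(a k : ℝ)| ≤ Real.exp (h + 1))
  have h4 := abs_le.1 (S.log_a k)
  have h5 := S.one_le
  linarith

lemma abs_aeval_near_le (S : ApproxSystem ξ K a b c e t α β u u') (k : ℕ) {R : ℤ[X]} {h s : ℝ}
    (P : PolyBound ξ K R h) (hr : |aeval ξ R| ≤ Real.exp s) :
    |aeval (α k) R| ≤ Real.exp s + Real.exp (h + 2 * K - 2 * t (k + 2)) := by
  have h1 := P.increment (α k) ξ (by linarith [S.near_le k]) (by norm_num)
  have h2 := abs_sub_abs_le_abs_sub (aeval (α k) R) (aeval ξ R)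
  have h3 : Real.exp (h + K) * |α k - ξ| ≤ Real.exp (h + 2 * K - 2 * t (k + 2)) := by
    rw [abs_eq_exp_log (S.near_ne k), ← Real.exp_add, Real.exp_le_exp]
    have := abs_le.1 (S.log_near k)
    linarith
  linarith

lemma abs_aeval_far_le (S : ApproxSystem ξ K a b c e t α β u u') (k : ℕ) {R : ℤ[X]} {h : ℝ}
    (P : PolyBound ξ K R h) : |aeval (β k) R| ≤ Real.exp (h + K) :=
  P.value _ (by linarith [S.far_le k])

end ApproxSystem

namespace ApproxSystem

variable {ξ K : ℝ} {a b c e : ℕ → ℤ} {t α β u u' : ℕ → ℝ}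

lemma exp_le_abs_unit_sub (S : ApproxSystem ξ K a b c e t α β u u') (k : ℕ) :
    Real.exp (t k - 2 * K) ≤ |u k - u' k| := by
  have h0 := S.one_le
  have h1 := abs_le.1 (S.log_u k)
  have h2 := abs_le.1 (S.log_u' k)
  have h3 := S.large k
  have h4 : Real.exp (t k - K) ≤ |u k| := by
    rw [abs_eq_exp_log (S.u_ne k)]
    exact Real.exp_le_exp.2 (by linarith)
  have h5 : |u' k| ≤ Real.exp (t k - 2 * K) := by
    rw [abs_eq_exp_log (S.u'_ne k)]
    exact Real.exp_le_exp.2 (by linarith)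
  have h6 := two_mul_exp_le (by linarith : t k - 2 * K + 1 ≤ t k - K)
  have h7 := abs_sub_abs_le_abs_sub (u k) (u' k)
  linarith

lemma log_weight_far (S : ApproxSystem ξ K a b c e t α β u u') (k i j : ℕ) {z σ : ℝ}
    (hz : z ≠ 0) (hσ : |Real.log z - σ| ≤ K) :
    z ^ i * ((a (k + 1) : ℝ) ^ (2 * j) *
      quadVal (a k) (b k) (c k) (e k) (β (k + 1)) ^ j) ≠ 0 ∧
    |Real.log (z ^ i * ((a (k + 1) : ℝ) ^ (2 * j) *
      quadVal (a k) (b k) (c k) (e k) (β (k + 1)) ^ j)) - (i * σ + j * (2 * t (k + 1) + t k))| ≤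
        (i + 3 * j) * K := by
  obtain ⟨h1, h2⟩ := log_unit_mul_pow hz (Int.cast_ne_zero.2 (S.a_ne (k + 1)))
    (S.val_far_ne k) i j
  refine ⟨h1, ?_⟩
  have h3 := abs_le.1 hσ
  have h4 := abs_le.1 (S.log_a (k + 1))
  have h5 := abs_le.1 (S.log_val_far k)
  have hi : (0 : ℝ) ≤ i := i.cast_nonneg
  have hj : (0 : ℝ) ≤ j := j.cast_nonneg
  rw [h2, abs_le]
  constructor <;> nlinarith

lemma log_weight_near (S : ApproxSystem ξ K a b c e t α β u u') (k i j : ℕ) {z σ : ℝ}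
    (hz : z ≠ 0) (hσ : |Real.log z - σ| ≤ K) :
    z ^ i * ((a (k + 1) : ℝ) ^ (2 * j) *
      quadVal (a k) (b k) (c k) (e k) (α (k + 1)) ^ j) ≠ 0 ∧
    |Real.log (z ^ i * ((a (k + 1) : ℝ) ^ (2 * j) *
      quadVal (a k) (b k) (c k) (e k) (α (k + 1)) ^ j)) - (i * σ - j * t k)| ≤
        (i + 3 * j) * K := by
  obtain ⟨h1, h2⟩ := log_unit_mul_pow hz (Int.cast_ne_zero.2 (S.a_ne (k + 1)))
    (S.val_near_ne k) i j
  refine ⟨h1, ?_⟩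
  have h3 := abs_le.1 hσ
  have h4 := abs_le.1 (S.log_a (k + 1))
  have h5 := abs_le.1 (S.log_val_near k)
  have hi : (0 : ℝ) ≤ i := i.cast_nonneg
  have hj : (0 : ℝ) ≤ j := j.cast_nonneg
  rw [h2, abs_le]
  constructor <;> nlinarith

lemma log_u'_sub (S : ApproxSystem ξ K a b c e t α β u u') (k : ℕ) :
    |Real.log (u' k) - -t k| ≤ K := by
  have h := S.log_u' k
  rwa [sub_neg_eq_add]

/-- A cubic polynomial which is very small at `ξ` vanishes at both roots of a quadratic one. -/
lemma aeval_eq_zero_of_natDegree_le_three (S : ApproxSystem ξ K a b c e t α β u u') (k : ℕ)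
    {R : ℤ[X]} {h : ℝ} (P : PolyBound ξ K R h) (hR : R.natDegree ≤ 3)
    (hh : h ≤ t (k + 2) - 20 * K)
    (hr : |aeval ξ R| ≤ Real.exp (-3 * t (k + 1) - t k - 10 * K)) :
    aeval (α (k + 1)) R = 0 ∧ aeval (β (k + 1)) R = 0 := by
  have h0 := S.one_le
  have f0 := abs_le.1 (S.fib k)
  have f1 := abs_le.1 (S.fib (k + 1))
  obtain ⟨hw, hlw⟩ := S.log_weight_far k 1 1 (S.u_ne (k + 1)) (S.log_u (k + 1))
  obtain ⟨hw', hlw'⟩ := S.log_weight_near k 1 1 (S.u'_ne (k + 1)) (S.log_u'_sub (k + 1))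
  push_cast at hlw hlw'
  rw [abs_le] at hlw hlw'
  have hα : |aeval (α (k + 1)) R| ≤ Real.exp (-3 * t (k + 1) - t k - 7 * K) :=
    (S.abs_aeval_near_le (k + 1) P hr).trans
      (exp_add_exp_le (by linarith) (by linarith))
  have hβ := S.abs_aeval_far_le (k + 1) P
  have hv := (abs_mul_le_exp hw (by linarith [hlw.2] : _ ≤ 3 * t (k + 1) + t k + 4 * K) hα).trans
    (Real.exp_le_exp.2 (by linarith : _ ≤ (-2 : ℝ)))
  have hv' := (abs_mul_le_exp hw' (by linarith [hlw'.2] : _ ≤ -t (k + 1) - t k + 4 * K) hβ).trans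
    (Real.exp_le_exp.2 (by linarith : _ ≤ (-2 : ℝ)))
  obtain ⟨h1, h2⟩ := eq_zero_of_mem_combGroup (S.mem_odd k 1 hR (RootPair.self_mem _ _) 1)
    (S.one_le_abs_sub (k + 1)) hv hv'
  exact ⟨(mul_eq_zero.1 h1).resolve_left hw, (mul_eq_zero.1 h2).resolve_left hw'⟩

lemma lt_abs_aeval_of_natDegree_le_four (S : ApproxSystem ξ K a b c e t α β u u') (k : ℕ)
    {R : ℤ[X]} {h : ℝ} (P : PolyBound ξ K R h) (hR : R.natDegree ≤ 4)
    (hh : h ≤ 0.9 * t (k + 1)) : Real.exp (-4.5 * t (k + 1)) < |aeval ξ R| := by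
  by_contra! hr
  have h0 := S.one_le
  have hl := S.large (k + 1)
  have g0 := S.growth_ge k
  have g0' := S.growth_le k
  have g1 := S.growth_ge (k + 1)
  have g2 := S.growth_ge (k + 2)
  obtain ⟨hw, hlw⟩ := S.log_weight_far k 0 2 (S.u'_ne (k + 1)) (S.log_u'_sub (k + 1))
  obtain ⟨hw', hlw'⟩ := S.log_weight_near k 0 2 (S.u_ne (k + 1)) (S.log_u (k + 1))
  push_cast at hlw hlw'
  rw [abs_le] at hlw hlw'
  have hα : |aeval (α (k + 1)) R| ≤ Real.exp (-4.33 * t (k + 1)) :=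
    (S.abs_aeval_near_le (k + 1) P hr).trans
      (exp_add_exp_le (by linarith) (by linarith))
  have hβ := S.abs_aeval_far_le (k + 1) P
  have hv := (abs_mul_le_exp hw (by linarith [hlw.2] : _ ≤ 4 * t (k + 1) + 2 * t k + 6 * K)
    hα).trans (Real.exp_le_exp.2 (by linarith : _ ≤ 0.91 * t (k + 1)))
  have hv' := (abs_mul_le_exp hw' (by linarith [hlw'.2] : _ ≤ -2 * t k + 6 * K) hβ).trans
    (Real.exp_le_exp.2 (by linarith : _ ≤ (-1 : ℝ)))
  have hlt : Real.exp (0.91 * t (k + 1)) + Real.exp (-1) < |u (k + 1) - u' (k + 1)| :=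
    ((exp_add_exp_le (s := 0.92 * t (k + 1)) (by linarith) (by linarith)).trans_lt
      (Real.exp_lt_exp.2 (by linarith))).trans_le (S.exp_le_abs_unit_sub (k + 1))
  obtain ⟨m, h1, h2⟩ := exists_intCast_eq_of_mem_combGroup (S.mem_even k 0 2 hR)
    ((add_le_add hv hv').trans_lt hlt)
  have hm : m = 0 := by
    rw [h2] at hv'
    have : |(m : ℝ)| < 1 := hv'.trans_lt (Real.exp_lt_one_iff.2 (by norm_num))
    exact Int.abs_lt_one_iff.1 (by exact_mod_cast this)
  rw [hm, Int.cast_zero] at h1 h2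
  have := S.le_of_aeval_eq_zero P ((mul_eq_zero.1 h1).resolve_left hw)
    ((mul_eq_zero.1 h2).resolve_left hw')
  linarith

lemma lt_abs_aeval_of_natDegree_le_five (S : ApproxSystem ξ K a b c e t α β u u') (k : ℕ)
    {R : ℤ[X]} {h : ℝ} (P : PolyBound ξ K R h) (hR : R.natDegree ≤ 5)
    (hh : h ≤ 0.45 * t (k + 1)) : Real.exp (-4.8 * t (k + 1)) < |aeval ξ R| := by
  by_contra! hr
  have h0 := S.one_le
  have hl := S.large (k + 1)
  have g0 := S.growth_ge k
  have g0' := S.growth_le k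
  have g1 := S.growth_ge (k + 1)
  have g2 := S.growth_ge (k + 2)
  obtain ⟨hw, hlw⟩ := S.log_weight_far k 1 2 (S.u'_ne (k + 1)) (S.log_u'_sub (k + 1))
  obtain ⟨hw', hlw'⟩ := S.log_weight_near k 1 2 (S.u_ne (k + 1)) (S.log_u (k + 1))
  push_cast at hlw hlw'
  rw [abs_le] at hlw hlw'
  have hα : |aeval (α (k + 1)) R| ≤ Real.exp (-4.78 * t (k + 1)) :=
    (S.abs_aeval_near_le (k + 1) P hr).trans
      (exp_add_exp_le (by linarith) (by linarith))
  have hβ := S.abs_aeval_far_le (k + 1) P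
  have hv := (abs_mul_le_exp hw (by linarith [hlw.2] : _ ≤ 3 * t (k + 1) + 2 * t k + 7 * K)
    hα).trans (Real.exp_le_exp.2 (by linarith : _ ≤ -0.54 * t (k + 1)))
  have hv' := (abs_mul_le_exp hw' (by linarith [hlw'.2] : _ ≤ t (k + 1) - 2 * t k + 7 * K)
    hβ).trans (Real.exp_le_exp.2 (by linarith : _ ≤ 0.22 * t (k + 1)))
  obtain ⟨m, n, h1, h2⟩ := mem_combGroup.1 (S.mem_odd k 2 hR (S.pair (k + 1)).swap_mem 1)
  dsimp only at h1 h2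
  have hn : n = 0 := by
    by_contra hn
    have hn' : (n : ℝ) ≠ 0 := Int.cast_ne_zero.2 hn
    have hnle : |(n : ℝ)| ≤ Real.exp (0.23 * t (k + 1)) := by
      calc |(n : ℝ)| ≤ |(n : ℝ)| * |α (k + 1) - β (k + 1)| :=
            le_mul_of_one_le_right (abs_nonneg _) (S.one_le_abs_sub (k + 1))
        _ = |(m + n * α (k + 1)) - (m + n * β (k + 1))| := by
            rw [← abs_mul]
            ring_nf
        _ ≤ _ := (abs_sub _ _).trans ((add_le_add (h1 ▸ hv) (h2 ▸ hv')).trans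
            (exp_add_exp_le (by linarith) (by linarith)))
    have hlog := log_le_of_abs_le_exp hn' hnle
    have hnear := abs_le.1 (S.log_near (k + 1))
    have hmn : |(m : ℝ) + n * ξ| ≤ Real.exp (-0.53 * t (k + 1)) := by
      have e1 : (m : ℝ) + n * ξ = (m + n * α (k + 1)) - n * (α (k + 1) - ξ) := by ring
      rw [e1]
      refine (abs_sub _ _).trans ((add_le_add (h1 ▸ hv) (abs_mul_le_exp hn' hlog
        (q := -2 * t (k + 3) + K) ?_)).trans (exp_add_exp_le (by linarith) (by linarith)))
      rw [abs_eq_exp_log (S.near_ne (k + 1)), Real.exp_le_exp]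
      linarith
    obtain ⟨i1, i2⟩ := S.irrational m n hn
    have i3 := log_le_of_abs_le_exp i1 hmn
    have i4 : gold * Real.log n ≤ 1.619 * (0.23 * t (k + 1)) :=
      (mul_le_mul_of_nonneg_left hlog (by linarith [gold_gt])).trans
        (mul_le_mul_of_nonneg_right gold_lt.le (by linarith))
    linarith
  have hm : m = 0 := by
    rw [h1, hn, Int.cast_zero, zero_mul, add_zero] at hv
    have : |(m : ℝ)| < 1 := hv.trans_lt (Real.exp_lt_one_iff.2 (by linarith))
    exact Int.abs_lt_one_iff.1 (by exact_mod_cast this)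
  rw [hn, hm, Int.cast_zero, zero_mul, add_zero] at h1 h2
  have := S.le_of_aeval_eq_zero P ((mul_eq_zero.1 h1).resolve_left hw)
    ((mul_eq_zero.1 h2).resolve_left hw')
  linarith

end ApproxSystem

lemma aeval_quadPoly (a b c e : ℤ) (y : ℝ) : aeval y (quadPoly a b c e) = quadVal a b c e y := by
  simp only [quadPoly, quadVal, map_add, map_mul, map_pow, aeval_X, aeval_C, algebraMap_int_eq,
    Int.coe_castRingHom]

namespace ApproxSystem

variable {ξ K : ℝ} {a b c e : ℕ → ℤ} {t α β u u' : ℕ → ℝ}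

lemma quadVal_ne_zero (S : ApproxSystem ξ K a b c e t α β u u') (k : ℕ) :
    quadVal (a k) (b k) (c k) (e k) ξ ≠ 0 ∧
      -gold ^ 3 * t k - 8 * K ≤ Real.log (quadVal (a k) (b k) (c k) (e k) ξ) := by
  have ha : (a k : ℝ) ≠ 0 := Int.cast_ne_zero.2 (S.a_ne k)
  have hα : ξ - α k ≠ 0 := fun h => S.near_ne k (by linarith)
  have hβ' : 2 ≤ |ξ - β k| := by
    rw [abs_sub_comm]
    exact S.far_ge k
  have hβ : ξ - β k ≠ 0 := abs_pos.1 (by linarith)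
  rw [(S.pair k).quadVal_eq]
  refine ⟨mul_ne_zero (mul_ne_zero ha hα) hβ, ?_⟩
  rw [Real.log_mul (mul_ne_zero ha hα) hβ, Real.log_mul ha hα]
  have h0 := S.one_le
  have h1 := abs_le.1 (S.log_a k)
  have h2 := abs_le.1 (S.log_near k)
  rw [← Real.log_abs, abs_sub_comm, Real.log_abs] at h2
  have h3 : 0 ≤ Real.log (ξ - β k) := by
    rw [← Real.log_abs]
    exact Real.log_nonneg (by linarith)
  have h4 := (abs_le.1 (S.growth k)).2
  have h5 := (abs_le.1 (S.growth (k + 1))).2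
  have hg := gold_gt
  have hg' := gold_lt
  have h6 : gold * t (k + 1) ≤ gold * (gold * t k + K) :=
    mul_le_mul_of_nonneg_left (by linarith) (by linarith)
  have h7 : gold * (gold * t k + K) = (gold + 1) * t k + gold * K := by
    linear_combination t k * gold_sq
  have h8 : gold ^ 3 * t k = (2 * gold + 1) * t k := by
    linear_combination (gold + 1) * t k * gold_sq
  have h9 : gold * K ≤ 1.619 * K := mul_le_mul_of_nonneg_right hg'.le (by linarith)
  nlinarith

/-- Lower bound at `ξ` for a cubic polynomial divisible, up to a factor `2`, by one of the
quadratic polynomials. -/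
lemma le_abs_aeval_of_aeval_eq_zero (S : ApproxSystem ξ K a b c e t α β u u') (k : ℕ)
    {R : ℤ[X]} {h : ℝ} (P : PolyBound ξ K R h) (hR : R.natDegree ≤ 3)
    (hα : aeval (α k) R = 0) (hβ : aeval (β k) R = 0) :
    Real.exp (-gold ^ 3 * h - 30 * K) ≤ |aeval ξ R| := by
  have h0 := S.one_le
  have hne : α k ≠ β k := fun h0 => by
    have := S.one_le_abs_sub k
    rw [h0, sub_self, abs_zero] at this
    linarith
  obtain ⟨A, hA⟩ := (S.pair k).exists_quadPoly_mul_eq (S.a_ne k) hne hα hβ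
  have h2R : C (2 : ℤ) * R ≠ 0 := mul_ne_zero (C_ne_zero.2 two_ne_zero) P.ne_zero
  have hA0 : A ≠ 0 := by
    rintro rfl
    exact h2R (by rw [← hA, mul_zero])
  have hF0 : quadPoly (a k) (b k) (c k) (e k) ≠ 0 := fun h1 => h2R (by rw [← hA, h1, zero_mul])
  have hdeg : A.natDegree ≤ 1 := by
    have h1 : (quadPoly (a k) (b k) (c k) (e k)).natDegree = 2 := natDegree_quadratic (S.a_ne k)
    have h2 := congrArg natDegree hA
    rw [natDegree_mul hF0 hA0, h1, natDegree_C_mul two_ne_zero] at h2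
    omega
  obtain ⟨p, q, rfl⟩ := exists_eq_X_add_C_of_natDegree_le_one hdeg
  have hval : ∀ y : ℝ, quadVal (a k) (b k) (c k) (e k) y * (q + p * y) = 2 * aeval y R := by
    intro y
    have h1 := congrArg (aeval y) hA
    rw [map_mul, map_mul, aeval_quadPoly] at h1
    simp only [map_add, map_mul, aeval_X, aeval_C, algebraMap_int_eq, Int.coe_castRingHom,
      Int.cast_ofNat] at h1
    rw [← h1]
    ring
  have hlog := abs_le.1 (S.log_a k)
  have hsize : ∀ y : ℝ, 10 ≤ y - ξ → y - ξ ≤ 11 →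
      |(q : ℝ) + p * y| ≤ Real.exp (h - t k + 2 * K + 1) := by
    intro y hy hy'
    have h1 : Real.exp (t k - K) ≤ |quadVal (a k) (b k) (c k) (e k) y| := by
      rw [(S.pair k).quadVal_eq, abs_mul, abs_mul,
        abs_eq_exp_log (Int.cast_ne_zero.2 (S.a_ne k) : (a k : ℝ) ≠ 0)]
      have i1 := abs_le.1 (S.near_le k)
      have i2 := abs_le.1 (S.far_le k)
      have i3 : 1 ≤ |y - α k| := by
        rw [abs_of_pos (by linarith)]
        linarith
      have i4 : 1 ≤ |y - β k| := by
        rw [abs_of_pos (by linarith)]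
        linarith
      calc Real.exp (t k - K) ≤ Real.exp (Real.log (a k)) := Real.exp_le_exp.2 (by linarith)
        _ ≤ Real.exp (Real.log (a k)) * |y - α k| :=
            le_mul_of_one_le_right (Real.exp_pos _).le i3
        _ ≤ _ := le_mul_of_one_le_right (by positivity) i4
    have h2 := P.value y (by rw [abs_of_pos (by linarith)]; linarith)
    have h3 := two_mul_exp_le (r := h + K) le_rfl
    have h4 := congrArg abs (hval y)
    rw [abs_mul, abs_mul, abs_two] at h4
    have h5 : Real.exp (t k - K) * |(q : ℝ) + p * y| ≤ Real.exp (h + K + 1) :=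
      (mul_le_mul_of_nonneg_right h1 (abs_nonneg _)).trans (by linarith)
    rw [show h + K + 1 = (t k - K) + (h - t k + 2 * K + 1) by ring, Real.exp_add] at h5
    exact le_of_mul_le_mul_left h5 (Real.exp_pos _)
  set w := h - t k + 2 * K + 2 with hw
  have h10 := hsize (ξ + 10) (by linarith) (by linarith)
  have h11 := hsize (ξ + 11) (by linarith) (by linarith)
  have hg := gold_gt
  have hg' := gold_lt
  have key : 0 ≤ w ∧ (q : ℝ) + p * ξ ≠ 0 ∧ -K - gold * w ≤ Real.log (q + p * ξ) := by
    have hint : ∀ m : ℤ, m ≠ 0 → 0 ≤ Real.log m := fun m hm => by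
      rw [← Real.log_abs]
      exact Real.log_nonneg (by exact_mod_cast Int.one_le_abs hm)
    rcases eq_or_ne p 0 with hp | hp
    · have hq : q ≠ 0 := by
        rintro rfl
        exact hA0 (by simp [hp])
      simp only [hp, Int.cast_zero, zero_mul, add_zero] at h10 ⊢
      have h1 := log_le_of_abs_le_exp (Int.cast_ne_zero.2 hq) h10
      have h2 := hint q hq
      have h3 : 0 ≤ w := by linarith
      exact ⟨h3, Int.cast_ne_zero.2 hq, by nlinarith⟩
    · have h1 : |(p : ℝ)| ≤ Real.exp w := by
        have h2 : (p : ℝ) = (q + p * (ξ + 11)) - (q + p * (ξ + 10)) := by ring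
        rw [h2]
        have h3 := two_mul_exp_le (by linarith : h - t k + 2 * K + 1 + 1 ≤ w)
        exact (abs_sub _ _).trans (by linarith)
      have h2 := log_le_of_abs_le_exp (Int.cast_ne_zero.2 hp) h1
      obtain ⟨h3, h4⟩ := S.irrational q p hp
      have h5 := mul_le_mul_of_nonneg_left h2 (by linarith : 0 ≤ gold)
      exact ⟨(hint p hp).trans h2, h3, by linarith⟩
  obtain ⟨hw0, hne0, hlogA⟩ := key
  obtain ⟨hF, hlogF⟩ := S.quadVal_ne_zero k
  have h1 : |aeval ξ R| * 2 =
      Real.exp (Real.log (quadVal (a k) (b k) (c k) (e k) ξ) + Real.log (q + p * ξ)) := by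
    rw [← Real.log_mul hF hne0, ← abs_eq_exp_log (mul_ne_zero hF hne0), hval, abs_mul, abs_two,
      mul_comm]
  have h2 := two_mul_exp_le (r := -gold ^ 3 * h - 30 * K) le_rfl
  have h3 : gold ^ 3 = 2 * gold + 1 := by linear_combination (gold + 1) * gold_sq
  have h4 : Real.exp (-gold ^ 3 * h - 30 * K + 1) ≤
      Real.exp (Real.log (quadVal (a k) (b k) (c k) (e k) ξ) + Real.log (q + p * ξ)) := by
    rw [Real.exp_le_exp]
    rw [h3] at hlogF ⊢
    have h5 : (gold + 1) * w = (2 * gold + 1) * (h - t k) - gold * w +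
      (2 * gold + 1) * (2 * K + 2) := by rw [hw]; ring
    have h6 : 0 ≤ (gold + 1) * w := mul_nonneg (by linarith) hw0
    have h7 : (2 * gold + 1) * (2 * K + 2) ≤ 4.3 * (2 * K + 2) :=
      mul_le_mul_of_nonneg_right (by linarith) (by linarith)
    linarith
  linarith

lemma lt_abs_aeval_of_natDegree_le_six (S : ApproxSystem ξ K a b c e t α β u u') (k : ℕ)
    {R : ℤ[X]} {h : ℝ} (P : PolyBound ξ K R h) (hR : R.natDegree ≤ 6)
    (hh : h ≤ 0.79 * t (k + 1)) : Real.exp (-15.5 * t (k + 1)) < |aeval ξ R| := by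
  by_contra! hr'
  have h0 := S.one_le
  have hl := S.large (k + 1)
  have g0 := S.growth_ge k
  have g0' := S.growth_le k
  have g1 := S.growth_ge (k + 1)
  have g1' := S.growth_le (k + 1)
  have g2 := S.growth_ge (k + 2)
  have g2' := S.growth_le (k + 2)
  have f0 := abs_le.1 (S.fib k)
  have f2 := abs_le.1 (S.fib (k + 2))
  have f3 := abs_le.1 (S.fib (k + 3))
  simp only [add_assoc, Nat.reduceAdd] at f0 f2 f3 g0 g0' g1 g1' g2 g2'
  have hh0 := P.nonneg
  have hr : |aeval ξ R| ≤ Real.exp (-4 * t (k + 3) - 3 * t (k + 2) - 30 * K) :=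
    hr'.trans (Real.exp_le_exp.2 (by linarith))
  obtain ⟨hw, hlw⟩ := S.log_weight_far (k + 2) 2 3 (S.u'_ne (k + 3)) (S.log_u'_sub (k + 3))
  obtain ⟨hw', hlw'⟩ := S.log_weight_near (k + 2) 2 3 (S.u_ne (k + 3)) (S.log_u (k + 3))
  have hmem := S.mem_even (k + 2) 2 3 hR
  simp only [add_assoc, Nat.reduceAdd] at hw hw' hlw hlw' hmem
  push_cast at hlw hlw'
  rw [abs_le] at hlw hlw'
  set W := u' (k + 3) ^ 2 * ((a (k + 3) : ℝ) ^ (2 * 3) *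
    quadVal (a (k + 2)) (b (k + 2)) (c (k + 2)) (e (k + 2)) (β (k + 3)) ^ 3)
  set W' := u (k + 3) ^ 2 * ((a (k + 3) : ℝ) ^ (2 * 3) *
    quadVal (a (k + 2)) (b (k + 2)) (c (k + 2)) (e (k + 2)) (α (k + 3)) ^ 3)
  have hα : |aeval (α (k + 3)) R| ≤
      Real.exp (h + 12 * K - 4 * t (k + 3) - 2 * t (k + 2)) :=
    (S.abs_aeval_near_le (k + 3) P hr).trans
      (exp_add_exp_le (by linarith) (by simp only [add_assoc, Nat.reduceAdd]; linarith))
  have hβ := S.abs_aeval_far_le (k + 3) P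
  have hv := (abs_mul_le_exp hw
    (by linarith [hlw.2] : _ ≤ 4 * t (k + 3) + 3 * t (k + 2) + 11 * K) hα).trans
    (Real.exp_le_exp.2 (by linarith : _ ≤ t (k + 3) - 4 * K))
  have hv' := abs_mul_le_exp hw'
    (by linarith [hlw'.2] : _ ≤ 2 * t (k + 3) - 3 * t (k + 2) + 11 * K) hβ
  obtain ⟨m, h1, h2⟩ := exists_intCast_eq_of_mem_combGroup hmem
    ((add_le_add hv hv').trans_lt (((exp_add_exp_le (s := t (k + 3) - 3 * K) (by linarith)
      (by linarith)).trans_lt (Real.exp_lt_exp.2 (by linarith))).trans_le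
      (S.exp_le_abs_unit_sub (k + 3))))
  have hm : m ≠ 0 := by
    rintro rfl
    rw [Int.cast_zero] at h1 h2
    have := S.le_of_aeval_eq_zero P ((mul_eq_zero.1 h1).resolve_left hw)
      ((mul_eq_zero.1 h2).resolve_left hw')
    linarith
  have hm' : (m : ℝ) ≠ 0 := Int.cast_ne_zero.2 hm
  have hμ0 : 0 ≤ Real.log m := by
    rw [← Real.log_abs]
    exact Real.log_nonneg (by exact_mod_cast Int.one_le_abs hm)
  have hμ1 : Real.log m ≤ 2 * t (k + 3) - 3 * t (k + 2) + h + 12 * K := by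
    rw [h2] at hv'
    have := log_le_of_abs_le_exp hm' hv'
    linarith
  have hα0 : aeval (α (k + 3)) R ≠ 0 := right_ne_zero_of_mul (h1 ▸ hm')
  have hβ0 : aeval (β (k + 3)) R ≠ 0 := right_ne_zero_of_mul (h2 ▸ hm')
  have hlα := congrArg Real.log h1
  have hlβ := congrArg Real.log h2
  rw [Real.log_mul hw hα0] at hlα
  rw [Real.log_mul hw' hβ0] at hlβ
  obtain ⟨ρ, hρ⟩ := P.expansion
  have hexp : ∀ j, |aeval (α j) R - ρ * (α j - ξ)| ≤
      Real.exp (-4 * t (k + 3) - 3 * t (k + 2) - 30 * K) +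
        Real.exp (h + 3 * K - 4 * t (j + 2)) := by
    intro j
    have i1 := hρ (α j) (by linarith [S.near_le j])
    have i2 : Real.exp (h + K) * (α j - ξ) ^ 2 ≤ Real.exp (h + 3 * K - 4 * t (j + 2)) := by
      rw [← sq_abs, abs_eq_exp_log (S.near_ne j), ← Real.exp_nat_mul, ← Real.exp_add,
        Real.exp_le_exp]
      push_cast
      linarith [(abs_le.1 (S.log_near j)).2]
    have i3 : aeval (α j) R - ρ * (α j - ξ) =
      aeval ξ R + (aeval (α j) R - aeval ξ R - ρ * (α j - ξ)) := by ring
    rw [i3]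
    exact (abs_add_le _ _).trans (by linarith)
  have n3 := abs_le.1 (S.log_near (k + 3))
  have n1 := abs_le.1 (S.log_near (k + 1))
  have e3 := hexp (k + 3)
  have e1 := hexp (k + 1)
  simp only [add_assoc, Nat.reduceAdd] at n3 n1 e3 e1
  rw [abs_sub_comm] at e3
  obtain ⟨hρ3, hlρ3⟩ := abs_log_sub_log_le hα0 e3 (by linarith) (by linarith)
  have hρ0 : ρ ≠ 0 := left_ne_zero_of_mul hρ3
  rw [Real.log_mul hρ0 (S.near_ne _), abs_le] at hlρ3
  have hlρ1 := Real.log_mul hρ0 (S.near_ne (k + 1))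
  obtain ⟨hα1, hlα1⟩ := abs_log_sub_log_le (mul_ne_zero hρ0 (S.near_ne (k + 1))) e1
    (by linarith) (by linarith)
  have hβ31 : |aeval (β (k + 1)) R - aeval (β (k + 3)) R| ≤
      Real.exp (h + 2 * K - 2 * t (k + 1)) + Real.exp (h + 2 * K - 2 * t (k + 1)) := by
    have i1 := P.increment (β (k + 1)) (β (k + 3)) (by linarith [S.far_le (k + 1)])
      (by linarith [S.far_le (k + 3)])
    have i2 := S.far_sub (k + 1)
    rw [abs_sub_comm] at i2
    have i3 := i1.trans (mul_le_mul_of_nonneg_left i2 (Real.exp_pos _).le)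
    rw [← Real.exp_add, show h + K + (-2 * t (k + 1) + K) = h + 2 * K - 2 * t (k + 1) by ring]
      at i3
    linarith [Real.exp_pos (h + 2 * K - 2 * t (k + 1))]
  obtain ⟨hβ1, hlβ1⟩ := abs_log_sub_log_le hβ0 hβ31 (by linarith) (by linarith)
  rw [abs_le] at hlα1 hlβ1
  obtain ⟨hV, hlV⟩ := S.log_weight_far k 2 3 (S.u'_ne (k + 1)) (S.log_u'_sub (k + 1))
  obtain ⟨hV', hlV'⟩ := S.log_weight_near k 2 3 (S.u_ne (k + 1)) (S.log_u (k + 1))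
  push_cast at hlV hlV'
  rw [abs_le] at hlV hlV'
  have hx := Real.log_mul hV hα1
  have hx' := Real.log_mul hV' hβ1
  have hmem1 := S.mem_even k 2 3 hR
  have hy := (abs_eq_exp_log (mul_ne_zero hV hα1)).le.trans
    (Real.exp_le_exp.2 (by linarith : _ ≤ t (k + 1) - 4 * K))
  have hy' := (abs_eq_exp_log (mul_ne_zero hV' hβ1)).le.trans
    (Real.exp_le_exp.2 (by linarith : _ ≤ t (k + 1) - 4 * K))
  obtain ⟨m', h3, h4⟩ := exists_intCast_eq_of_mem_combGroup hmem1
    ((add_le_add hy hy').trans_lt (((exp_add_exp_le (s := t (k + 1) - 3 * K) (by linarith)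
      (by linarith)).trans_lt (Real.exp_lt_exp.2 (by linarith))).trans_le
      (S.exp_le_abs_unit_sub (k + 1))))
  rw [h3] at hx
  rw [h4] at hx'
  linarith

lemma exists_le (S : ApproxSystem ξ K a b c e t α β u u') (y : ℝ) : ∃ k, y ≤ t k := by
  have h : ∀ k : ℕ, (k : ℝ) ≤ t k := by
    intro k
    induction k with
    | zero =>
      have := S.large 0
      have := S.one_le
      push_cast
      linarith
    | succ k ih =>
      have h1 := S.large k
      have h2 := S.one_le
      have h3 := S.growth_ge k
      push_cast
      linarith
  obtain ⟨k, hk⟩ := exists_nat_ge y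
  exact ⟨k, hk.trans (h k)⟩

/-- Passage from bounds in terms of the heights `t (k + 1)` to bounds in terms of `h`. -/
lemma le_abs_of_forall (S : ApproxSystem ξ K a b c e t α β u u') {l κ E h r : ℝ} (hl : 0 < l)
    (hκ : 0 ≤ κ) (hE : κ * 1.6191 ≤ E * l) (hh : 0 ≤ h)
    (H : ∀ k, h ≤ l * t (k + 1) → Real.exp (-κ * t (k + 1)) < |r|) :
    Real.exp (-E * h - κ * t 1) ≤ |r| := by
  classical
  have hex : ∃ k, h ≤ l * t (k + 1) := by
    obtain ⟨k, hk⟩ := S.exists_le (h / l)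
    refine ⟨k, ?_⟩
    have h1 := S.growth_ge k
    have h2 := S.large k
    have h3 := S.one_le
    rw [div_le_iff₀ hl] at hk
    nlinarith
  have hE0 : 0 ≤ E := by nlinarith
  have ht : 0 ≤ t 1 := by linarith [S.large 1, S.one_le]
  refine le_trans (Real.exp_le_exp.2 ?_) (H _ (Nat.find_spec hex)).le
  rcases hk : Nat.find hex with _ | k
  · have := mul_nonneg hE0 hh
    rw [zero_add]
    linarith
  · have h1 : l * t (k + 1) < h :=
      not_le.1 (Nat.find_min hex (m := k) (by omega))
    have h2 := S.growth_le (k + 1)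
    have h3 := S.large (k + 1)
    have h4 := S.one_le
    have h5 : κ * t (k + 2) ≤ κ * (1.6191 * t (k + 1)) := mul_le_mul_of_nonneg_left h2 hκ
    have h6 : κ * 1.6191 * t (k + 1) ≤ E * l * t (k + 1) :=
      mul_le_mul_of_nonneg_right hE (by linarith)
    have h7 : E * (l * t (k + 1)) ≤ E * h := mul_le_mul_of_nonneg_left h1.le hE0
    have h8 := mul_nonneg hκ ht
    simp only [add_assoc, Nat.reduceAdd]
    linarith

lemma le_abs_aeval_of_natDegree_le_three (S : ApproxSystem ξ K a b c e t α β u u')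
    {R : ℤ[X]} {h : ℝ} (P : PolyBound ξ K R h) (hR : R.natDegree ≤ 3) :
    Real.exp (-gold ^ 3 * h - 100 * K - 4 * t 1) ≤ |aeval ξ R| := by
  classical
  have h0 := S.one_le
  have hex : ∃ k, h ≤ t (k + 2) - 20 * K := by
    obtain ⟨k, hk⟩ := S.exists_le h
    refine ⟨k, ?_⟩
    have h1 := S.growth_ge k
    have h2 := S.large k
    have h3 := S.growth_ge (k + 1)
    have h4 := S.large (k + 1)
    simp only [add_assoc, Nat.reduceAdd] at h3
    linarith
  have ht : 0 ≤ t 1 := by linarith [S.large 1]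
  have hg : gold ^ 3 = 2 * gold + 1 := by linear_combination (gold + 1) * gold_sq
  have hg1 := gold_gt
  have hg2 := gold_lt
  have hs := Nat.find_spec hex
  set k := Nat.find hex with hk
  by_cases hr : |aeval ξ R| ≤ Real.exp (-3 * t (k + 1) - t k - 10 * K)
  · obtain ⟨h1, h2⟩ := S.aeval_eq_zero_of_natDegree_le_three k P hR hs hr
    exact (Real.exp_le_exp.2 (by linarith)).trans (S.le_abs_aeval_of_aeval_eq_zero _ P hR h1 h2)
  · refine le_trans (Real.exp_le_exp.2 ?_) (not_le.1 hr).le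
    have h1 := S.growth_ge k
    have h2 := S.large k
    have hh := P.nonneg
    have h5 : gold ^ 3 * h ≥ 4 * h := by
      rw [hg]
      nlinarith
    rcases hk' : k with _ | j
    · rw [hk'] at h1 h2
      rw [zero_add] at h1 ⊢
      linarith
    · have h3 : t (j + 2) - 20 * K < h := not_le.1 (Nat.find_min hex (m := j) (by omega))
      rw [hk'] at h1 h2
      simp only [add_assoc, Nat.reduceAdd] at h1 ⊢
      linarith

end ApproxSystem

theorem stmt4 (ξ : ℝ) (x : ℕ → Matrix (Fin 2) (Fin 2) ℤ) (hx : MarkoffSeq ξ x) :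
    ∃ c : ℝ, 0 < c ∧ ∀ R : Polynomial ℤ, R ≠ 0 → R.natDegree ≤ 6 →
      (R.natDegree ≤ 3 →
        |Polynomial.aeval ξ R| ≥ c * (polyNorm R : ℝ) ^ (-(gold ^ 3))) ∧
      (4 ≤ R.natDegree →
        |Polynomial.aeval ξ R| ≥
          c * (polyNorm R : ℝ) ^ (gold ^ 2 - 2 * gold ^ R.natDegree)) := by
  obtain ⟨K₀, hK₀⟩ := exists_polyBound ξ
  obtain ⟨K, a, b, c, e, t, α, β, u, u', hK, S⟩ := hx.exists_approxSystem K₀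
  have h0 := S.one_le
  have ht : 0 ≤ t 1 := by linarith [S.large 1]
  refine ⟨Real.exp (-(100 * K + 16 * t 1)), Real.exp_pos _, fun R hR hdeg => ?_⟩
  have P := hK₀ K hK R hR hdeg
  have hH : (0 : ℝ) < polyNorm R := by linarith [one_le_polyNorm hR]
  have hg := gold_gt
  have g2 := gold_sq
  have g4 : gold ^ 4 = 3 * gold + 2 := by linear_combination (gold ^ 2 + gold + 2) * g2
  have g5 : gold ^ 5 = 5 * gold + 3 := by
    linear_combination (gold ^ 3 + gold ^ 2 + 2 * gold + 3) * g2
  have g6 : gold ^ 6 = 8 * gold + 5 := by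
    linear_combination (gold ^ 4 + gold ^ 3 + 2 * gold ^ 2 + 3 * gold + 5) * g2
  rw [Real.rpow_def_of_pos hH, Real.rpow_def_of_pos hH, ← Real.exp_add, ← Real.exp_add]
  refine ⟨fun hd => ?_, fun hd => ?_⟩
  · exact (Real.exp_le_exp.2 (by linarith)).trans (S.le_abs_aeval_of_natDegree_le_three P hd)
  · obtain hd | hd | hd : R.natDegree = 4 ∨ R.natDegree = 5 ∨ R.natDegree = 6 := by omega
    · refine (Real.exp_le_exp.2 ?_).trans
        (S.le_abs_of_forall (l := 0.9) (κ := 4.5) (E := 2 * gold ^ 4 - gold ^ 2) (by norm_num)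
          (by norm_num) (by linarith) P.nonneg
          fun k => S.lt_abs_aeval_of_natDegree_le_four k P hd.le)
      rw [hd]
      linarith
    · refine (Real.exp_le_exp.2 ?_).trans
        (S.le_abs_of_forall (l := 0.45) (κ := 4.8) (E := 2 * gold ^ 5 - gold ^ 2) (by norm_num)
          (by norm_num) (by linarith) P.nonneg
          fun k => S.lt_abs_aeval_of_natDegree_le_five k P hd.le)
      rw [hd]
      linarith
    · refine (Real.exp_le_exp.2 ?_).trans
        (S.le_abs_of_forall (l := 0.79) (κ := 15.5) (E := 2 * gold ^ 6 - gold ^ 2) (by norm_num)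
          (by norm_num) (by linarith) P.nonneg
          fun k => S.lt_abs_aeval_of_natDegree_le_six k P hd.le)
      rw [hd]
      linarith
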